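/- arXiv:2405.15235 — 4 statements merged into one kernel-verified Lean document; each statement's English description precedes it below -/
import Mathlib

section
/- Let K be a field of characteristic 0 and L a Lie algebra over K whose universal enveloping algebra U(L) is left Noetherian. Then L satisfies the ascending chain condition on Lie subalgebras. -/
namespace PBWAux

variable {K : Type*} [Field K] {L : Type*} [LieRing L] [LieAlgebra K L]
  {I : Type*} [LinearOrder I] (b : Module.Basis I K L)

/-- Linear extension of a function on words in one slot. -/
noncomputable def F (φ : List I → K) (u v : List I) : L →ₗ[K] K :=
  b.constr K (fun k => φ (u ++ k :: v))

theorem F_basis (φ : List I → K) (u v : List I) (k : I) :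
    F b φ u v (b k) = φ (u ++ k :: v) := by
  simp [F, Module.Basis.constr_basis]

/-- Bilinear extension in two slots. -/
noncomputable def F2 (φ : List I → K) (u w v : List I) : L →ₗ[K] L →ₗ[K] K :=
  b.constr K (fun k => F b φ (u ++ k :: w) v)

theorem F2_basis (φ : List I → K) (u w v : List I) (k : I) :
    F2 b φ u w v (b k) = F b φ (u ++ k :: w) v := by
  simp [F2, Module.Basis.constr_basis]

theorem F2_basis' (φ : List I → K) (u w v : List I) (x : L) (k : I) :
    F2 b φ u w v x (b k) = F b φ u (w ++ k :: v) x := by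
  have : (F2 b φ u w v).flip (b k) = F b φ u (w ++ k :: v) := by
    apply b.ext
    intro l
    simp [F2_basis, F_basis]
  rw [← this]; rfl

noncomputable def A (φ : List I → K) (u : List I) (i : I) : List I → K
  | [] => 0
  | j :: v => if i ≤ j then 0 else F b φ u v ⁅b i, b j⁆ + A φ (u ++ [j]) i v
termination_by v => v.length

noncomputable def S (φ : List I → K) (u : List I) : List I → K
  | [] => 0
  | i :: w => S φ (u ++ [i]) w + A b φ u i (w.insertionSort (· ≤ ·))
termination_by w => w.length

/-- Commutation relations for words of length `m`. -/
def Rel (m : ℕ) (ψ φ : List I → K) : Prop :=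
  ∀ u i j v, u.length + v.length + 2 = m →
    ψ (u ++ i :: j :: v) - ψ (u ++ j :: i :: v) = F b φ u v ⁅b i, b j⁆

variable {b} {m : ℕ} {φ φ' : List I → K}

theorem Rel.far_left (h : Rel b m φ φ') (u w v : List I) (i j : I) (y : L)
    (hl : u.length + w.length + v.length + 3 = m) :
    F b φ (u ++ i :: j :: w) v y - F b φ (u ++ j :: i :: w) v y
      = F2 b φ' u w v ⁅b i, b j⁆ y := by
  have : F b φ (u ++ i :: j :: w) v - F b φ (u ++ j :: i :: w) v
      = F2 b φ' u w v ⁅b i, b j⁆ := by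
    apply b.ext
    intro k
    rw [F2_basis', LinearMap.sub_apply, F_basis, F_basis,
      ← h u i j (w ++ k :: v) (by simp; omega)]
    simp
  rw [← this]; rfl

theorem Rel.far_right (h : Rel b m φ φ') (u w v : List I) (i j : I) (x : L)
    (hl : u.length + w.length + v.length + 3 = m) :
    F b φ u (w ++ i :: j :: v) x - F b φ u (w ++ j :: i :: v) x
      = F2 b φ' u w v x ⁅b i, b j⁆ := by
  have : F b φ u (w ++ i :: j :: v) - F b φ u (w ++ j :: i :: v)
      = (F2 b φ' u w v).flip ⁅b i, b j⁆ := by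
    apply b.ext
    intro k
    rw [LinearMap.flip_apply, F2_basis, LinearMap.sub_apply, F_basis, F_basis,
      ← h (u ++ k :: w) i j v (by simp; omega)]
    simp
  rw [← LinearMap.flip_apply, ← this]; rfl

theorem Rel.adj (h : Rel b m φ φ') (u v : List I) (k : I) (x : L)
    (hl : u.length + v.length + 2 = m) :
    F b φ u (k :: v) x - F b φ (u ++ [k]) v x = F b φ' u v ⁅x, b k⁆ := by
  have : F b φ u (k :: v) - F b φ (u ++ [k]) v
      = - (F b φ' u v).comp (LieAlgebra.ad K L (b k)) := by
    apply b.ext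
    intro l
    rw [LinearMap.sub_apply, F_basis, F_basis]
    simp only [LinearMap.neg_apply, LinearMap.comp_apply, LieAlgebra.ad_apply]
    rw [← map_neg, lie_skew, ← h u l k v hl]
    simp
  have h2 := LinearMap.congr_fun this x
  simp only [LinearMap.sub_apply, LinearMap.neg_apply, LinearMap.comp_apply,
    LieAlgebra.ad_apply] at h2
  rw [h2, ← map_neg, lie_skew]

theorem comm_A (h : Rel b m φ φ') (p : List I) (i j a : I) (s : List I) : ∀ (q : List I),
    p.length + q.length + s.length + 2 = m →
    A b φ (p ++ i :: j :: q) a s - A b φ (p ++ j :: i :: q) a s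
      = F b φ p (q ++ a :: s) ⁅b i, b j⁆
        - F b φ p (q ++ s.orderedInsert (· ≤ ·) a) ⁅b i, b j⁆ := by
  induction s with
  | nil => intro q hl; simp [A]
  | cons k s ih =>
    intro q hl
    simp only [List.length_cons] at hl
    by_cases hak : a ≤ k
    · simp [A, hak]
    · have h1 := ih (q ++ [k]) (by simp; omega)
      have h2 := h.far_left p q s i j ⁅b a, b k⁆ (by omega)
      have h3 := h.far_right p q s a k ⁅b i, b j⁆ (by omega)
      simp only [A, hak, if_false, List.orderedInsert, List.append_assoc, List.cons_append,
        List.nil_append] at h1 h2 h3 ⊢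
      linear_combination h1 + h2 - h3

theorem comm_S (h : Rel b m φ φ') (p : List I) (i j : I) (w : List I) : ∀ (q : List I),
    p.length + q.length + w.length + 1 = m →
    S b φ (p ++ i :: j :: q) w - S b φ (p ++ j :: i :: q) w
      = F b φ p (q ++ w) ⁅b i, b j⁆
        - F b φ p (q ++ w.insertionSort (· ≤ ·)) ⁅b i, b j⁆ := by
  induction w with
  | nil => intro q hl; simp [S]
  | cons a w ih =>
    intro q hl
    simp only [List.length_cons] at hl
    have h1 := ih (q ++ [a]) (by simp; omega)
    have h2 := comm_A h p i j a (w.insertionSort (· ≤ ·)) q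
      (by rw [List.length_insertionSort]; omega)
    simp only [S, List.insertionSort_cons, List.append_assoc, List.cons_append,
        List.nil_append] at h1 h2 ⊢
    linear_combination h1 + h2

theorem braid (h : Rel b m φ φ') (i j : I) (hij : j < i) (s : List I) : ∀ (p : List I),
    p.length + s.length + 1 = m →
    A b φ (p ++ [i]) j s + A b φ p i (s.orderedInsert (· ≤ ·) j)
      - A b φ (p ++ [j]) i s - A b φ p j (s.orderedInsert (· ≤ ·) i)
      = F b φ p s ⁅b i, b j⁆ := by
  induction s with
  | nil => intro p hl; simp [A, hij, hij.le, not_le.2 hij]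
  | cons k s ih =>
    intro p hl
    simp only [List.length_cons] at hl
    by_cases hjk : j ≤ k
    · by_cases hik : i ≤ k
      · simp [A, hjk, hik, hij.le, not_le.2 hij]
      · simp [A, hjk, hik, not_le.2 hij]
    · have hik : ¬ i ≤ k := fun hh => hjk (hij.le.trans hh)
      have h1 := ih (p ++ [k]) (by simp; omega)
      have h2 := comm_A h p i k j s [] (by simp; omega)
      have h3 := comm_A h p j k i s [] (by simp; omega)
      have e1 := h.adj p s k ⁅b i, b j⁆ (by omega)
      have e2 := h.adj p s i ⁅b j, b k⁆ (by omega)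
      have e3 := h.adj p s j ⁅b i, b k⁆ (by omega)
      have jac : F b φ' p s ⁅⁅b i, b j⁆, b k⁆ + F b φ' p s ⁅⁅b j, b k⁆, b i⁆
          - F b φ' p s ⁅⁅b i, b k⁆, b j⁆ = 0 := by
        rw [← map_add, ← map_sub]
        have : ⁅⁅b i, b j⁆, b k⁆ + ⁅⁅b j, b k⁆, b i⁆ - ⁅⁅b i, b k⁆, b j⁆ = 0 := by
          rw [lie_lie (b i) (b j) (b k), ← lie_skew ⁅b j, b k⁆ (b i), ← lie_skew ⁅b i, b k⁆ (b j)]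
          abel
        rw [this, map_zero]
      simp only [A, hjk, hik, if_false, List.orderedInsert, List.append_assoc, List.cons_append,
        List.nil_append] at h1 h2 h3 e1 e2 e3 ⊢
      linear_combination h1 + h2 - h3 - e1 - e2 + e3 - jac

theorem braid' (h : Rel b m φ φ') (i j : I) (s p : List I)
    (hl : p.length + s.length + 1 = m) :
    A b φ (p ++ [i]) j s + A b φ p i (s.orderedInsert (· ≤ ·) j)
      - A b φ (p ++ [j]) i s - A b φ p j (s.orderedInsert (· ≤ ·) i)
      = F b φ p s ⁅b i, b j⁆ := by
  rcases lt_trichotomy j i with hij | rfl | hij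
  · exact braid h i j hij s p hl
  · simp
  · have := braid h j i hij s p hl
    rw [← lie_skew, map_neg]
    linear_combination -this

theorem S_rel (h : Rel b m φ φ') (i j : I) (v : List I) (u : List I) : ∀ (p : List I),
    p.length + u.length + v.length + 1 = m →
    S b φ p (u ++ i :: j :: v) - S b φ p (u ++ j :: i :: v)
      = F b φ (p ++ u) v ⁅b i, b j⁆ := by
  induction u with
  | nil =>
    intro p hl
    simp only [List.length_nil] at hl
    have h1 := comm_S h p i j v [] (by simp; omega)
    have h2 := braid' h i j (v.insertionSort (· ≤ ·)) p
      (by rw [List.length_insertionSort]; omega)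
    simp only [S, List.insertionSort_cons, List.append_assoc, List.cons_append,
        List.nil_append, List.append_nil] at h1 h2 ⊢
    linear_combination h1 + h2
  | cons a u ih =>
    intro p hl
    simp only [List.length_cons] at hl
    have h1 := ih (p ++ [a]) (by simp; omega)
    have hs : (u ++ i :: j :: v).insertionSort (· ≤ ·)
        = (u ++ j :: i :: v).insertionSort (· ≤ ·) := by
      apply List.Perm.eq_of_pairwise' (r := (· ≤ ·))
      · exact List.pairwise_insertionSort _ _
      · exact List.pairwise_insertionSort _ _
      · exact (List.perm_insertionSort _ _).trans
          (((List.Perm.swap j i v).append_left u).trans (List.perm_insertionSort _ _).symm)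
    simp only [S, hs, List.append_assoc, List.cons_append, List.nil_append] at h1 ⊢
    linear_combination h1

variable (b)

/-- The functional on words of a given length. -/
noncomputable def Phi (f : L →ₗ[K] K) : ℕ → List I → K
  | 0 => fun _ => 0
  | 1 => fun w => match w with
    | [i] => f (b i)
    | _ => 0
  | (n + 2) => S b (Phi f (n + 1)) []

theorem Phi_rel (f : L →ₗ[K] K) : ∀ n, Rel b (n + 1) (Phi b f (n + 1)) (Phi b f n)
  | 0 => by intro u i j v hl; omega
  | (n + 1) => by
    intro u i j v hl
    have := S_rel (Phi_rel f n) i j v u [] (by simp; omega)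
    simpa [Phi] using this

/-- The functional on all words. -/
noncomputable def phi (f : L →ₗ[K] K) (w : List I) : K := Phi b f w.length w

theorem phi_rel (f : L →ₗ[K] K) (u : List I) (i j : I) (v : List I) :
    phi b f (u ++ i :: j :: v) - phi b f (u ++ j :: i :: v)
      = F b (phi b f) u v ⁅b i, b j⁆ := by
  have h := Phi_rel b f (u.length + v.length + 1) u i j v (by omega)
  have e : F b (phi b f) u v = F b (Phi b f (u.length + v.length + 1)) u v := by
    apply b.ext
    intro k
    rw [F_basis, F_basis, phi]
    congr 1
    simp; omega
  rw [e, ← h]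
  simp only [phi]
  congr 2 <;> (simp; omega)

section vanish

variable (H : LieSubalgebra K L)

theorem F_vanish (hspan : ∀ x ∈ H, x ∈ Submodule.span K (b '' {i | b i ∈ H}))
    {φ : List I → K} (u : List I)
    (hφ : ∀ h, b h ∈ H → φ (u ++ [h]) = 0) {x : L} (hx : x ∈ H) : F b φ u [] x = 0 := by
  have : Submodule.span K (b '' {i | b i ∈ H}) ≤ LinearMap.ker (F b φ u []) := by
    rw [Submodule.span_le]
    rintro _ ⟨i, hi, rfl⟩
    simpa [F_basis] using hφ i hi
  exact this (hspan x hx)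

theorem F_vanish' {φ : List I → K} (u v : List I) (h : I)
    (hφ : ∀ w, φ (w ++ [h]) = 0) : F b φ u (v ++ [h]) = 0 := by
  apply b.ext
  intro k
  rw [F_basis]
  simpa using hφ (u ++ k :: v)

theorem A_vanish
    (hspan : ∀ x ∈ H, x ∈ Submodule.span K (b '' {i | b i ∈ H}))
    (hup : ∀ i j, i ≤ j → b i ∈ H → b j ∈ H)
    {φ : List I → K} (hφ : ∀ w h, b h ∈ H → φ (w ++ [h]) = 0)
    (i h : I) (hh : b h ∈ H) (s : List I) : ∀ u, A b φ u i (s ++ [h]) = 0 := by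
  induction s with
  | nil =>
    intro u
    by_cases hi : i ≤ h
    · simp [A, hi]
    · have : b i ∈ H := hup h i (not_le.1 hi).le hh
      simp [A, hi, F_vanish b H hspan u (hφ u) (H.lie_mem this hh)]
  | cons k s ih =>
    intro u
    simp [A, ih, F_vanish' b u s h (fun w => hφ w h hh)]

theorem insert_end (hup : ∀ i j, i ≤ j → b i ∈ H → b j ∈ H)
    (i h : I) (hh : b h ∈ H) (s : List I) :
    ∃ t h', b h' ∈ H ∧ (s ++ [h]).orderedInsert (· ≤ ·) i = t ++ [h'] := by
  induction s with
  | nil =>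
    by_cases hi : i ≤ h
    · exact ⟨[i], h, hh, by simp [hi]⟩
    · exact ⟨[h], i, hup h i (not_le.1 hi).le hh, by simp [hi]⟩
  | cons k s ih =>
    obtain ⟨t, h', hh', e⟩ := ih
    by_cases hi : i ≤ k
    · exact ⟨i :: k :: s, h, hh, by simp [hi]⟩
    · exact ⟨k :: t, h', hh', by simp [hi, e]⟩

theorem sort_end (hup : ∀ i j, i ≤ j → b i ∈ H → b j ∈ H)
    (h : I) (hh : b h ∈ H) (s : List I) :
    ∃ t h', b h' ∈ H ∧ (s ++ [h]).insertionSort (· ≤ ·) = t ++ [h'] := by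
  induction s with
  | nil => exact ⟨[], h, hh, by simp⟩
  | cons k s ih =>
    obtain ⟨t, h', hh', e⟩ := ih
    obtain ⟨t', h'', hh'', e'⟩ := insert_end b H hup k h' hh' t
    exact ⟨t', h'', hh'', by rw [List.cons_append, List.insertionSort_cons, e, e']⟩

theorem S_vanish
    (hspan : ∀ x ∈ H, x ∈ Submodule.span K (b '' {i | b i ∈ H}))
    (hup : ∀ i j, i ≤ j → b i ∈ H → b j ∈ H)
    {φ : List I → K} (hφ : ∀ w h, b h ∈ H → φ (w ++ [h]) = 0)
    (h : I) (hh : b h ∈ H) (s : List I) : ∀ u, S b φ u (s ++ [h]) = 0 := by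
  induction s with
  | nil => intro u; simp [S, A]
  | cons k s ih =>
    intro u
    obtain ⟨t, h', hh', e⟩ := sort_end b H hup h hh s
    rw [List.cons_append, S, ih, e, A_vanish b H hspan hup hφ k h' hh' t, add_zero]

theorem Phi_vanish
    (hspan : ∀ x ∈ H, x ∈ Submodule.span K (b '' {i | b i ∈ H}))
    (hup : ∀ i j, i ≤ j → b i ∈ H → b j ∈ H)
    (f : L →ₗ[K] K) (hf : ∀ x ∈ H, f x = 0) : ∀ n w h, b h ∈ H →
    Phi b f n (w ++ [h]) = 0
  | 0, w, h, hh => by simp [Phi]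
  | 1, [], h, hh => by simpa [Phi] using hf _ hh
  | 1, [k], h, hh => by simp [Phi]
  | 1, k :: l :: w, h, hh => by simp [Phi]
  | (n + 2), w, h, hh => by
    have ih := Phi_vanish hspan hup f hf (n + 1)
    exact S_vanish b H hspan hup ih h hh w []

end vanish

theorem F_add (g g' : List I → K) (u v : List I) :
    F b (g + g') u v = F b g u v + F b g' u v := by
  apply b.ext; intro k; simp [F_basis]

theorem F_smul (c : K) (g : List I → K) (u v : List I) :
    F b (c • g) u v = c • F b g u v := by
  apply b.ext; intro k; simp [F_basis]

/-- The module of functionals on words satisfying the commutation relations. -/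
def M : Submodule K (List I → K) where
  carrier := {g | ∀ m, Rel b m g g}
  zero_mem' := by
    intro m u i j v _
    have : F b (0 : List I → K) u v = 0 := by
      apply b.ext; intro k; simp [F_basis]
    simp [this]
  add_mem' := by
    intro g g' hg hg' m u i j v hl
    have h1 := hg m u i j v hl
    have h2 := hg' m u i j v hl
    simp only [F_add, Pi.add_apply, LinearMap.add_apply]
    linear_combination h1 + h2
  smul_mem' := by
    intro c g hg m u i j v hl
    have h1 := hg m u i j v hl
    simp only [F_smul, Pi.smul_apply, LinearMap.smul_apply, smul_eq_mul]
    linear_combination c * h1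

/-- Action of `x` on functionals. -/
noncomputable def act (x : L) (g : List I → K) : List I → K := fun w => F b g w [] x

theorem F_act (x : L) (g : List I → K) (u v : List I) (y : L) :
    F b (act b x g) u v y = F2 b g u v [] y x := by
  have : F b (act b x g) u v = (F2 b g u v []).flip x := by
    apply b.ext; intro k
    rw [F_basis, LinearMap.flip_apply, F2_basis, act]
  rw [this]; rfl

theorem act_mem (x : L) {g : List I → K} (hg : g ∈ M b) : act b x g ∈ M b := by
  intro m u i j v hl
  rw [F_act]
  exact (hg (m + 1)).far_left u v [] i j x (by simp; omega)

theorem act_lie (x y : L) {g : List I → K} (hg : g ∈ M b) :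
    act b ⁅x, y⁆ g = act b x (act b y g) - act b y (act b x g) := by
  funext w
  simp only [Pi.sub_apply]
  change F b g w [] ⁅x, y⁆ = F b (act b y g) w [] x - F b (act b x g) w [] y
  rw [F_act, F_act]
  have : ((LieModule.toEnd K L L : L →ₗ[K] Module.End K L).compr₂ (F b g w []))
      = F2 b g w [] [] - (F2 b g w [] []).flip := by
    apply b.ext; intro i
    apply b.ext; intro j
    have := hg (w.length + 2) w i j [] (by simp)
    simp only [LinearMap.compr₂_apply, LinearMap.sub_apply, LinearMap.flip_apply, F2_basis,
      F_basis]
    simpa using this.symm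
  exact LinearMap.congr_fun (LinearMap.congr_fun this x) y

attribute [local instance] LieRing.ofAssociativeRing

/-- The action as a Lie algebra representation. -/
noncomputable def rep : L →ₗ⁅K⁆ Module.End K (M b) where
  toFun x :=
    { toFun := fun g => ⟨act b x g, act_mem b x g.2⟩
      map_add' := by
        intro g g'; ext w; simp [act, F_add]
      map_smul' := by
        intro c g; ext w; simp [act, F_smul] }
  map_add' := by intro x y; ext g w; simp [act]
  map_smul' := by intro c x; ext g w; simp [act]
  map_lie' := by
    intro x y
    ext g w
    have := congrFun (act_lie b x y g.2) w
    simpa [LieRing.of_associative_ring_bracket] using this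

theorem phi_mem (f : L →ₗ[K] K) : phi b f ∈ M b := fun _ u i j v _ => phi_rel b f u i j v

theorem exists_basis.{u} {K : Type*} [Field K] {L : Type u} [LieRing L] [LieAlgebra K L]
    (H : LieSubalgebra K L) :
    ∃ (I : Type u) (_ : LinearOrder I) (b : Module.Basis I K L),
      (∀ x ∈ H, x ∈ Submodule.span K (b '' {i | b i ∈ H})) ∧
      (∀ i j, i ≤ j → b i ∈ H → b j ∈ H) := by
  classical
  obtain ⟨C, hC⟩ := Submodule.exists_isCompl H.toSubmodule
  let bH := Module.Basis.ofVectorSpace K H.toSubmodule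
  let bC := Module.Basis.ofVectorSpace K C
  let b0 := (bC.prod bH).map (Submodule.prodEquivOfIsCompl C H.toSubmodule hC.symm)
  let _ : LinearOrder (Module.Basis.ofVectorSpaceIndex K C) := linearOrderOfSTO WellOrderingRel
  let _ : LinearOrder (Module.Basis.ofVectorSpaceIndex K H.toSubmodule) :=
    linearOrderOfSTO WellOrderingRel
  have hl : ∀ i, b0 (Sum.inl i) = (bC i : L) := by intro i; simp [b0]
  have hr : ∀ i, b0 (Sum.inr i) = (bH i : L) := by intro i; simp [b0]
  have hrH : ∀ i, b0 (Sum.inr i) ∈ H := fun i => by rw [hr]; exact (bH i).2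
  have hlH : ∀ i, b0 (Sum.inl i) ∉ H := fun i hi => by
    have h1 : (bC i : L) ∈ H.toSubmodule ⊓ C := ⟨by rw [← hl]; exact hi, (bC i).2⟩
    rw [hC.inf_eq_bot, Submodule.mem_bot] at h1
    exact bC.ne_zero i (Subtype.ext h1)
  refine ⟨Lex (_ ⊕ _), Sum.Lex.linearOrder, b0.reindex toLex, ?_, ?_⟩
  · intro x hx
    have h1 := bH.mem_span ⟨x, hx⟩
    have h2 := Submodule.mem_map_of_mem (f := H.toSubmodule.subtype) h1
    rw [Submodule.map_span] at h2
    refine Submodule.span_mono ?_ h2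
    rintro _ ⟨_, ⟨i, rfl⟩, rfl⟩
    refine ⟨toLex (Sum.inr i), ?_, ?_⟩
    · simpa using hrH i
    · simpa using hr i
  · intro i j hij hi
    obtain ⟨i, rfl⟩ := toLex.surjective i
    obtain ⟨j, rfl⟩ := toLex.surjective j
    simp only [Module.Basis.reindex_apply, Equiv.symm_apply_apply] at hi ⊢
    rcases i with i | i
    · exact absurd hi (hlH i)
    · rcases j with j | j
      · exact absurd hij (by simp)
      · exact hrH j

theorem notMem_span {K : Type*} [Field K] {L : Type*} [LieRing L] [LieAlgebra K L]
    (H : LieSubalgebra K L) (x : L) (hx : x ∉ H) :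
    UniversalEnvelopingAlgebra.ι K x ∉
      Ideal.span (UniversalEnvelopingAlgebra.ι K '' (H : Set L)) := by
  obtain ⟨I, _, b, hspan, hup⟩ := exists_basis H
  obtain ⟨f, hfx, hf⟩ := Submodule.exists_le_ker_of_notMem (p := H.toSubmodule) (v := x) hx
  let v : M b := ⟨phi b f, phi_mem b f⟩
  let ρ := UniversalEnvelopingAlgebra.lift K (rep b)
  let J : Ideal (UniversalEnvelopingAlgebra K L) :=
    { carrier := {a | ρ a v = 0}
      zero_mem' := by simp
      add_mem' := by intro a a' ha ha'; simp_all
      smul_mem' := by intro c a ha; simp_all }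
  have hJ : Ideal.span (UniversalEnvelopingAlgebra.ι K '' (H : Set L)) ≤ J := by
    rw [Ideal.span_le]
    rintro _ ⟨h, hh, rfl⟩
    change ρ _ v = 0
    simp only [ρ, UniversalEnvelopingAlgebra.lift_ι_apply]
    ext w
    change F b (phi b f) w [] h = 0
    have hf0 : ∀ y ∈ H, f y = 0 := fun y hy => LinearMap.mem_ker.1 (hf hy)
    have hv : ∀ k, b k ∈ H → phi b f (w ++ [k]) = 0 := fun k hk => by
      rw [phi]
      exact Phi_vanish b H hspan hup f hf0 (w ++ [k]).length w k hk
    exact F_vanish b H hspan w hv hh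
  intro hxs
  have h1 : ρ _ v = 0 := hJ hxs
  simp only [ρ, UniversalEnvelopingAlgebra.lift_ι_apply] at h1
  have h2 : F b (phi b f) [] [] x = 0 := congrFun (congrArg Subtype.val h1) []
  have h3 : F b (phi b f) [] [] = f := by
    apply b.ext; intro k; simp [F_basis, phi, Phi]
  rw [h3] at h2
  exact hfx h2

end PBWAux


/-- If the universal enveloping algebra of a Lie algebra `L` over a field of
characteristic zero is left Noetherian, then `L` satisfies the ascending chain
condition on Lie subalgebras: every ascending chain of Lie subalgebras stabilizes. -/
theorem acc_lieSubalgebra_of_noetherian_uea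
    (K : Type*) [Field K] [CharZero K]
    (L : Type*) [LieRing L] [LieAlgebra K L]
    (hNoeth : IsNoetherianRing (UniversalEnvelopingAlgebra K L)) :
    ∀ f : ℕ →o LieSubalgebra K L, ∃ n : ℕ, ∀ m : ℕ, n ≤ m → f m = f n := by
  intro f
  let g : ℕ →o Ideal (UniversalEnvelopingAlgebra K L) :=
    ⟨fun n => Ideal.span (UniversalEnvelopingAlgebra.ι K '' (f n : Set L)),
      fun n m h => Ideal.span_mono (Set.image_mono (f.monotone h))⟩
  obtain ⟨n, hn⟩ := monotone_stabilizes_iff_noetherian.2 hNoeth g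
  refine ⟨n, fun m hm => le_antisymm (fun x hx => ?_) (f.monotone hm)⟩
  by_contra hxn
  apply PBWAux.notMem_span (f n) x hxn
  have h1 : UniversalEnvelopingAlgebra.ι K x ∈ g m :=
    Ideal.subset_span (Set.mem_image_of_mem _ hx)
  rw [← hn m hm] at h1
  exact h1
end

section
/- Let K be a field of characteristic 0 and L a Lie algebra over K whose universal enveloping algebra U(L) is left Noetherian. If q is a Lie subalgebra of L and m is a Lie ideal of q, then U(q/m) is left Noetherian. -/
open Module

namespace PBW

set_option linter.unusedSectionVars false

attribute [local instance] LieRing.ofAssociativeRing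

section words
variable {ι : Type*} [LinearOrder ι]

/-- Number of inversions of a word. -/
def inv : List ι → ℕ
  | [] => 0
  | x :: w => w.countP (· < x) + inv w

theorem inv_swap (a : List ι) (x y : ι) (b : List ι) (h : y < x) :
    inv (a ++ x :: y :: b) = inv (a ++ y :: x :: b) + 1 := by
  induction a with
  | nil =>
    simp [inv, h, h.not_gt]; omega
  | cons z a ih =>
    simp only [List.cons_append, inv, ih]
    have : (a ++ x :: y :: b).countP (· < z) = (a ++ y :: x :: b).countP (· < z) :=
      List.Perm.countP_eq _ ((List.Perm.swap y x b).append_left a)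
    omega

/-- A word has a descent. -/
def HasDesc (w : List ι) : Prop :=
  ∃ d : List ι × ι × ι × List ι, w = d.1 ++ d.2.1 :: d.2.2.1 :: d.2.2.2 ∧ d.2.2.1 < d.2.1

theorem sorted_of_not_hasDesc (w : List ι) (h : ¬ HasDesc w) : w.Pairwise (· ≤ ·) := by
  rw [← List.isChain_iff_pairwise]
  induction w with
  | nil => simp
  | cons x w ih =>
    cases w with
    | nil => simp
    | cons y w =>
      rw [List.isChain_cons_cons]
      refine ⟨?_, ih ?_⟩
      · by_contra hc
        exact h ⟨([], x, y, w), rfl, not_le.1 hc⟩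
      · rintro ⟨⟨a, x', y', b⟩, h1, h2⟩
        exact h ⟨(x :: a, x', y', b), by simp only [h1, List.cons_append], h2⟩

theorem not_hasDesc_of_sorted (w : List ι) (h : w.Pairwise (· ≤ ·)) : ¬ HasDesc w := by
  rintro ⟨⟨a, x, y, b⟩, h1, h2⟩
  subst h1
  simp only [List.pairwise_append, List.pairwise_cons] at h
  have := h.2.1.1 y (by simp)
  exact absurd h2 (not_lt.2 this)

theorem word_induction {P : List ι → Prop} (h0 : ∀ w : List ι, w.Pairwise (· ≤ ·) → P w)
    (h1 : ∀ (a : List ι) (x y : ι) (c : List ι), y < x → P (a ++ y :: x :: c) →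
      (∀ k, P (a ++ k :: c)) → P (a ++ x :: y :: c)) (w : List ι) : P w := by
  suffices H : ∀ n i : ℕ, ∀ w : List ι, w.length = n → inv w = i → P w from H _ _ w rfl rfl
  intro n
  induction n using Nat.strong_induction_on with
  | _ n ihn =>
  intro i
  induction i using Nat.strong_induction_on with
  | _ i ihi =>
  intro w hn hi
  by_cases h : HasDesc w
  · obtain ⟨⟨a, x, y, c⟩, hw, hxy⟩ := h
    simp only at hw hxy
    subst hw
    have := inv_swap a x y c hxy
    simp only [List.length_append, List.length_cons] at hn
    refine h1 a x y c hxy (ihi _ (by omega) _ (by simp; omega) rfl) fun k => ?_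
    exact ihn _ (by simp; omega) _ _ rfl rfl
  · exact h0 w (sorted_of_not_hasDesc w h)

end words

section main
variable {ι : Type*} [LinearOrder ι] {K L E : Type*} [Field K] [LieRing L] [LieAlgebra K L]
  [AddCommGroup E] [Module K E] (b : Basis ι K L) (f : List ι → E)

open Classical in
/-- The normal form functional on words. -/
noncomputable def nf (w : List ι) : E :=
  if h : HasDesc w then
    nf (h.choose.1 ++ h.choose.2.2.1 :: h.choose.2.1 :: h.choose.2.2.2) +
    (b.repr ⁅b h.choose.2.1, b h.choose.2.2.1⁆).sum
      fun k s => s • nf (h.choose.1 ++ k :: h.choose.2.2.2)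
  else f w
termination_by (w.length, inv w)
decreasing_by
  · have h1 := h.choose_spec
    have h2 := inv_swap h.choose.1 _ _ h.choose.2.2.2 h1.2
    rw [← h1.1] at h2
    have h3 := congrArg List.length h1.1
    simp only [List.length_append, List.length_cons] at h3
    rw [Prod.lex_def]
    right
    constructor
    · simp only [List.length_append, List.length_cons]; omega
    · omega
  · have h1 := h.choose_spec
    have h3 := congrArg List.length h1.1
    simp only [List.length_append, List.length_cons] at h3
    rw [Prod.lex_def]
    left
    simp only [List.length_append, List.length_cons]; omega

/-- The word as an element of the tensor algebra. -/
noncomputable def W (w : List ι) : TensorAlgebra K L :=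
  (w.map fun i => TensorAlgebra.ι K (b i)).prod

@[simp] theorem W_nil : W b [] = 1 := rfl
@[simp] theorem W_append (a c : List ι) : W b (a ++ c) = W b a * W b c := by simp [W]
@[simp] theorem W_cons (x : ι) (c : List ι) :
    W b (x :: c) = TensorAlgebra.ι K (b x) * W b c := by simp [W]

theorem basis_apply (w : List ι) : b.tensorAlgebra (FreeMonoid.ofList w) = W b w := by
  have h : b.tensorAlgebra (FreeMonoid.ofList w) = (TensorAlgebra.equivFreeAlgebra b).symm
      (FreeAlgebra.equivMonoidAlgebraFreeMonoid.symm
        (MonoidAlgebra.single (FreeMonoid.ofList w) (1 : K))) := by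
    simp only [Module.Basis.tensorAlgebra, Basis.map_apply, FreeAlgebra.basisFreeMonoid]
    simp
  have h2 : FreeAlgebra.equivMonoidAlgebraFreeMonoid.symm
        (MonoidAlgebra.single (FreeMonoid.ofList w) (1 : K)) =
        (w.map (FreeAlgebra.ι K)).prod := by
    simp [FreeAlgebra.equivMonoidAlgebraFreeMonoid, FreeMonoid.lift_apply]
  rw [h, h2, map_list_prod, List.map_map, W]
  congr 1
  apply List.map_congr_left
  intro i _
  simp

/-- The functional on the tensor algebra. -/
noncomputable def R : TensorAlgebra K L →ₗ[K] E :=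
  b.tensorAlgebra.constr K fun w => nf b f (FreeMonoid.toList w)

@[simp] theorem R_W (w : List ι) : R b f (W b w) = nf b f w := by
  rw [← basis_apply, R, Basis.constr_basis]; rfl

/-- The defining relation of the enveloping algebra. -/
noncomputable def rel (X Y : L) : TensorAlgebra K L :=
  TensorAlgebra.ι K X * TensorAlgebra.ι K Y - TensorAlgebra.ι K Y * TensorAlgebra.ι K X
    - TensorAlgebra.ι K ⁅X, Y⁆

theorem R_mid (a c : List ι) (Z : L) :
    R b f (W b a * TensorAlgebra.ι K Z * W b c) =
      (b.repr Z).sum fun k s => s • nf b f (a ++ k :: c) := by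
  conv_lhs => rw [← b.linearCombination_repr Z]
  rw [Finsupp.linearCombination_apply]
  simp only [Finsupp.sum, map_sum, map_smul, Finset.mul_sum, Finset.sum_mul]
  refine Finset.sum_congr rfl fun k _ => ?_
  rw [mul_smul_comm, smul_mul_assoc, map_smul, ← R_W, W_append, W_cons, mul_assoc]

theorem R_chosen (w : List ι) (h : HasDesc w) : ∃ a x y c, w = a ++ x :: y :: c ∧ y < x ∧
    R b f (W b a * rel (K := K) (b x) (b y) * W b c) = 0 := by
  refine ⟨h.choose.1, h.choose.2.1, h.choose.2.2.1, h.choose.2.2.2, h.choose_spec.1,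
    h.choose_spec.2, ?_⟩
  have h1 := nf.eq_1 b f w
  rw [dif_pos h, ← R_mid, ← R_W, ← R_W] at h1
  have h2 : W b w = W b _ := congrArg (W b) h.choose_spec.1
  rw [h2] at h1
  simp only [W_append, W_cons] at h1
  simp only [rel, mul_sub, sub_mul, map_sub, mul_assoc] at h1 ⊢
  rw [h1]; abel

theorem rel_skew (X Y : L) : rel (K := K) X Y = - rel Y X := by
  simp only [rel]
  rw [← lie_skew X Y, map_neg]; abel

theorem rel_self (X : L) : rel (K := K) X X = 0 := by simp [rel]

/-- Bilinear version of `rel`. -/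
noncomputable def relB : L →ₗ[K] L →ₗ[K] TensorAlgebra K L :=
  LinearMap.mk₂ K (fun X Y => rel (K := K) X Y)
    (by intros; simp only [rel, map_add, add_lie, add_mul, mul_add]; abel)
    (by intros; simp only [rel, map_smul, smul_lie, smul_mul_assoc, mul_smul_comm, smul_sub])
    (by intros; simp only [rel, map_add, lie_add, add_mul, mul_add]; abel)
    (by intros; simp only [rel, map_smul, lie_smul, smul_mul_assoc, mul_smul_comm, smul_sub])

theorem relB_apply (X Y : L) : relB (K := K) X Y = rel X Y := rfl

theorem kill_ext (A C : TensorAlgebra K L)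
    (h : ∀ x y, R b f (A * rel (K := K) (b x) (b y) * C) = 0) (X Y : L) :
    R b f (A * rel (K := K) X Y * C) = 0 := by
  let g : TensorAlgebra K L →ₗ[K] E :=
    R b f ∘ₗ LinearMap.mulRight K C ∘ₗ LinearMap.mulLeft K A
  have : (relB (K := K) (L := L)).compr₂ g = 0 := by
    refine b.ext fun x => b.ext fun y => ?_
    simpa [g, relB_apply] using h x y
  simpa [g, relB_apply] using LinearMap.congr_fun₂ this X Y

theorem iota_ext (A C : TensorAlgebra K L)
    (h : ∀ x, R b f (A * TensorAlgebra.ι K (b x) * C) = 0) (X : L) :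
    R b f (A * TensorAlgebra.ι K X * C) = 0 := by
  let g : L →ₗ[K] E :=
    R b f ∘ₗ LinearMap.mulRight K C ∘ₗ LinearMap.mulLeft K A ∘ₗ TensorAlgebra.ι K
  have : g = 0 := by
    refine b.ext fun x => ?_
    simpa [g] using h x
  simpa [g] using LinearMap.congr_fun this X

theorem overlap (A C : TensorAlgebra K L) (X Y Z : L)  :
    A * rel (K := K) X Y * (TensorAlgebra.ι K Z * C) -
      (A * TensorAlgebra.ι K X) * rel Y Z * C =
    - ((A * TensorAlgebra.ι K Y) * rel X Z * C) + A * rel X Z * (TensorAlgebra.ι K Y * C)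
    - A * rel Y Z * (TensorAlgebra.ι K X * C) + (A * TensorAlgebra.ι K Z) * rel X Y * C
    + A * rel X ⁅Y, Z⁆ * C + A * rel ⁅X, Z⁆ Y * C - A * rel ⁅X, Y⁆ Z * C := by
  have J : TensorAlgebra.ι K ⁅⁅X, Y⁆, Z⁆ = TensorAlgebra.ι K ⁅X, ⁅Y, Z⁆⁆ +
      TensorAlgebra.ι K ⁅⁅X, Z⁆, Y⁆ := by
    rw [← map_add]; congr 1
    rw [lie_lie X Y Z, ← lie_skew ⁅X, Z⁆ Y]; abel
  simp only [rel]
  rw [J]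
  noncomm_ring

theorem disjoint' (A B C X Y X' Y' l l' : TensorAlgebra K L) :
    A * (X * Y - Y * X - l) * (B * (X' * (Y' * C))) -
      (A * (X * (Y * B))) * (X' * Y' - Y' * X' - l') * C =
    A * (X * Y - Y * X - l) * (B * (Y' * (X' * C)))
    - (A * (Y * (X * B))) * (X' * Y' - Y' * X' - l') * C
    + (A * (X * Y - Y * X - l) * B) * l' * C
    - A * l * (B * (X' * Y' - Y' * X' - l') * C) := by
  noncomm_ring

/-- One direction of the local confluence. -/
theorem confl (n i : ℕ)
    (low : ∀ a c : List ι, a.length + c.length + 2 < n → ∀ X Y : L,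
      R b f (W b a * rel (K := K) X Y * W b c) = 0)
    (ih : ∀ (a : List ι) (x y : ι) (c : List ι), a.length + c.length + 2 = n → y < x →
      inv (a ++ x :: y :: c) < i → R b f (W b a * rel (K := K) (b x) (b y) * W b c) = 0)
    (a : List ι) (x y : ι) (c l : List ι) (x' y' : ι) (c' : List ι) (hxy : y < x) (hxy' : y' < x')
    (hn : a.length + c.length + 2 = n) (hi : inv (a ++ x :: y :: c) = i)
    (hl : x :: y :: c = l ++ x' :: y' :: c') :
    R b f (W b a * rel (K := K) (b x) (b y) * W b c) =
    R b f (W b (a ++ l) * rel (K := K) (b x') (b y') * W b c') := by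
  match l, hl with
  | [], hl =>
    simp only [List.nil_append, List.cons.injEq] at hl
    obtain ⟨rfl, rfl, rfl⟩ := hl
    simp
  | [p], hl =>
    simp only [List.cons_append, List.nil_append, List.cons.injEq] at hl
    obtain ⟨rfl, rfl, rfl⟩ := hl
    simp only [List.length_cons] at hn
    rw [← sub_eq_zero, ← map_sub]
    simp only [W_append, W_cons, W_nil, mul_one]
    rw [overlap]
    have s1 := inv_swap a _ _ (y' :: c') hxy
    have s2 := inv_swap (a ++ [x]) _ _ c' hxy'
    have s3 := inv_swap a _ _ (y :: c') (hxy'.trans hxy)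
    have s4 := inv_swap (a ++ [y]) _ _ c' (hxy'.trans hxy)
    have s5 := inv_swap (a ++ [y']) _ _ c' hxy
    have s6 := inv_swap a _ _ (x :: c') hxy'
    simp only [List.append_assoc, List.cons_append, List.nil_append] at s2 s4 s5
    have e1 := ih (a ++ [y]) x y' c' (by simp; omega) (hxy'.trans hxy) (by simp; omega)
    have e2 := ih a x y' (y :: c') (by simp; omega) (hxy'.trans hxy) (by omega)
    have e3 := ih a y y' (x :: c') (by simp; omega) hxy' (by omega)
    have e4 := ih (a ++ [y']) x y c' (by simp; omega) hxy (by simp; omega)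
    have e5 := low a c' (by omega)
    simp only [W_append, W_cons, W_nil, mul_one] at e1 e2 e3 e4
    simp only [map_add, map_sub, map_neg, e1, e2, e3, e4, e5]
    simp
  | p :: q :: l, hl =>
    simp only [List.cons_append, List.cons.injEq] at hl
    obtain ⟨rfl, rfl, rfl⟩ := hl
    simp only [List.length_append, List.length_cons] at hn
    rw [← sub_eq_zero, ← map_sub]
    simp only [W_append, W_cons]
    have s1 := inv_swap a _ _ (l ++ x' :: y' :: c') hxy
    have s2 := inv_swap (a ++ x :: y :: l) _ _ c' hxy'
    simp only [List.append_assoc, List.cons_append] at s2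
    have e1 := ih a x y (l ++ y' :: x' :: c') (by simp; omega) hxy (by omega)
    have e2 := ih (a ++ y :: x :: l) x' y' c' (by simp; omega) hxy' (by simp; omega)
    have e3 : R b f ((W b a * rel (K := K) (b x) (b y) * W b l) *
        TensorAlgebra.ι K ⁅b x', b y'⁆ * W b c') = 0 := by
      apply iota_ext
      intro z
      have := low a (l ++ z :: c') (by simp; omega) (b x) (b y)
      simpa [mul_assoc] using this
    have e4 : R b f (W b a * TensorAlgebra.ι K ⁅b x, b y⁆ *
        (W b l * rel (K := K) (b x') (b y') * W b c')) = 0 := by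
      apply iota_ext
      intro z
      have := low (a ++ z :: l) c' (by simp; omega) (b x') (b y')
      simpa [mul_assoc] using this
    simp only [W_append, W_cons] at e1 e2
    simp only [rel] at e1 e2 e3 e4 ⊢
    rw [disjoint']
    simp only [map_add, map_sub, e1, e2, e3, e4]
    simp

theorem kill_desc (n i : ℕ)
    (low : ∀ a c : List ι, a.length + c.length + 2 < n → ∀ X Y : L,
      R b f (W b a * rel (K := K) X Y * W b c) = 0) :
    ∀ (a : List ι) (x y : ι) (c : List ι), a.length + c.length + 2 = n → y < x →
      inv (a ++ x :: y :: c) = i → R b f (W b a * rel (K := K) (b x) (b y) * W b c) = 0 := by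
  induction i using Nat.strong_induction_on with
  | _ i ih =>
  intro a x y c hn hxy hi
  have ih' : ∀ (a : List ι) (x y : ι) (c : List ι), a.length + c.length + 2 = n → y < x →
      inv (a ++ x :: y :: c) < i → R b f (W b a * rel (K := K) (b x) (b y) * W b c) = 0 :=
    fun a x y c h1 h2 h3 => ih _ h3 a x y c h1 h2 rfl
  obtain ⟨a', x', y', c', hw, hxy', h0⟩ := R_chosen b f (a ++ x :: y :: c) ⟨(a, x, y, c), rfl, hxy⟩
  have hlen := congrArg List.length hw
  simp only [List.length_append, List.length_cons] at hlen
  rcases List.append_eq_append_iff.1 hw with ⟨l, rfl, h⟩ | ⟨l, rfl, h⟩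
  · rw [confl b f n i low ih' a x y c l x' y' c' hxy hxy' hn hi h, h0]
  · rw [← h0]
    exact (confl b f n i low ih' a' x' y' c' l x y c hxy' hxy (by omega) (by rw [← hw, hi]) h).symm

theorem kill_word (n : ℕ) : ∀ a c : List ι, a.length + c.length + 2 = n → ∀ X Y : L,
      R b f (W b a * rel (K := K) X Y * W b c) = 0 := by
  induction n using Nat.strong_induction_on with
  | _ n ih =>
  intro a c hn
  apply kill_ext
  have low : ∀ a c : List ι, a.length + c.length + 2 < n → ∀ X Y : L,
      R b f (W b a * rel (K := K) X Y * W b c) = 0 := fun a c h => ih _ h a c rfl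
  intro x y
  rcases lt_trichotomy x y with h | h | h
  · rw [rel_skew]
    simpa using kill_desc b f n _ low a y x c hn h rfl
  · subst h; simp [rel_self]
  · exact kill_desc b f n _ low a x y c hn h rfl

/-- The normal form functional kills the two-sided ideal. -/
theorem kill (A C : TensorAlgebra K L) (X Y : L) : R b f (A * rel (K := K) X Y * C) = 0 := by
  have h1 : ∀ a : List ι, ∀ C : TensorAlgebra K L, R b f (W b a * rel (K := K) X Y * C) = 0 := by
    intro a C
    let g : TensorAlgebra K L →ₗ[K] E := R b f ∘ₗ LinearMap.mulLeft K (W b a * rel (K := K) X Y)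
    have : g = 0 := b.tensorAlgebra.ext fun w => by
      have := basis_apply b (FreeMonoid.toList w)
      rw [FreeMonoid.ofList_toList] at this
      rw [this]
      exact kill_word b f _ a _ rfl X Y
    exact LinearMap.congr_fun this C
  let g : TensorAlgebra K L →ₗ[K] E := R b f ∘ₗ LinearMap.mulRight K (rel (K := K) X Y * C)
  have : g = 0 := b.tensorAlgebra.ext fun w => by
    have := basis_apply b (FreeMonoid.toList w)
    rw [FreeMonoid.ofList_toList] at this
    rw [this]
    simpa [g, mul_assoc] using h1 (FreeMonoid.toList w) C
  simpa [g, mul_assoc] using LinearMap.congr_fun this A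

theorem nf_desc (a : List ι) (x y : ι) (c : List ι) :
    nf b f (a ++ x :: y :: c) = nf b f (a ++ y :: x :: c) +
      (b.repr ⁅b x, b y⁆).sum fun k s => s • nf b f (a ++ k :: c) := by
  have := kill b f (W b a) (W b c) (b x) (b y)
  rw [← R_mid, ← R_W, ← R_W]
  simp only [W_append, W_cons, rel, mul_sub, sub_mul, map_sub, mul_assoc] at this ⊢
  rw [sub_sub, sub_eq_zero] at this
  exact this

theorem nf_sorted (w : List ι) (h : w.Pairwise (· ≤ ·)) : nf b f w = f w := by
  rw [nf, dif_neg (not_hasDesc_of_sorted w h)]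

end main

section retract
variable {ι : Type*} [LinearOrder ι] {K L : Type*} [Field K] [LieRing L] [LieAlgebra K L]


theorem mk_surjective : Function.Surjective (UniversalEnvelopingAlgebra.mkAlgHom K L) :=
  RingCon.mkₐ_surjective _

theorem mem_span_of_mk_eq_zero (t : TensorAlgebra K L)
    (ht : UniversalEnvelopingAlgebra.mkAlgHom K L t = 0) :
    t ∈ TwoSidedIdeal.span {z : TensorAlgebra K L | ∃ X Y : L, z = rel (K := K) X Y} := by
  set J := TwoSidedIdeal.span {z : TensorAlgebra K L | ∃ X Y : L, z = rel (K := K) X Y} with hJ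
  let p : TensorAlgebra K L →ₐ[K] J.ringCon.Quotient := RingCon.mkₐ K J.ringCon
  have hp : ∀ z, p z = 0 ↔ z ∈ J := by
    intro z
    rw [TwoSidedIdeal.mem_iff, ← RingCon.eq]
    rfl
  let φ : L →ₗ⁅K⁆ J.ringCon.Quotient :=
    { p.toLinearMap.comp (TensorAlgebra.ι K) with
      map_lie' := by
        intro X Y
        have : p (rel (K := K) X Y) = 0 := (hp _).2 (TwoSidedIdeal.subset_span ⟨X, Y, rfl⟩)
        simp only [rel, map_sub, map_mul] at this
        rw [LieRing.of_associative_ring_bracket]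
        exact (sub_eq_zero.1 this).symm }
  have h : (UniversalEnvelopingAlgebra.lift K φ).comp
      (UniversalEnvelopingAlgebra.mkAlgHom K L) = p := by
    apply TensorAlgebra.hom_ext
    ext X
    simp only [LinearMap.comp_apply, AlgHom.toLinearMap_apply, AlgHom.comp_apply,
      UniversalEnvelopingAlgebra.lift_ι_apply']
    rfl
  rw [← hp, ← h, AlgHom.comp_apply, ht, map_zero]

theorem R_eq_zero_of_mk {E : Type*} [AddCommGroup E] [Module K E] (b : Basis ι K L)
    (f : List ι → E) (t : TensorAlgebra K L)
    (ht : UniversalEnvelopingAlgebra.mkAlgHom K L t = 0) : R b f t = 0 := by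
  have := mem_span_of_mk_eq_zero t ht
  clear ht
  rw [TwoSidedIdeal.mem_span_iff_mem_addSubgroup_closure] at this
  induction this using AddSubgroup.closure_induction with
  | mem x hx =>
    obtain ⟨_, ⟨A, _, _, ⟨X, Y, rfl⟩, rfl⟩, C, _, rfl⟩ := hx
    exact kill b f A C X Y
  | zero => simp
  | add x y _ _ hx hy => rw [map_add, hx, hy, add_zero]
  | neg x _ hx => rw [map_neg, hx, neg_zero]

theorem sorted_split (Q : ι → Prop) (hlt : ∀ i j, ¬ Q i → Q j → i < j) (w : List ι)
    (hw : w.Pairwise (· ≤ ·)) :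
    ∃ s t, w = s ++ t ∧ s.Pairwise (· ≤ ·) ∧ (∀ i ∈ s, ¬ Q i) ∧ ∀ i ∈ t, Q i := by
  induction w with
  | nil => exact ⟨[], [], by simp⟩
  | cons x w ih =>
    have hw' := hw
    rw [List.pairwise_cons] at hw
    by_cases hx : Q x
    · refine ⟨[], x :: w, by simp, by simp, by simp, ?_⟩
      intro i hi
      rcases List.mem_cons.1 hi with rfl | hi
      · exact hx
      · by_contra hc
        exact absurd (hlt i x hc hx) (not_lt.2 (hw.1 i hi))
    · obtain ⟨s, t, rfl, h1, h2, h3⟩ := ih hw.2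
      refine ⟨x :: s, t, by simp, ?_, ?_, h3⟩
      · exact List.Pairwise.sublist (by simp) hw'
      · intro i hi
        rcases List.mem_cons.1 hi with rfl | hi
        · exact hx
        · exact h2 i hi

variable (q : LieSubalgebra K L) (b : Basis ι K L) (Q : ι → Prop) (P : L →ₗ[K] q)

/-- Letters projected to `U(q)`. -/
noncomputable def G : L →ₗ[K] UniversalEnvelopingAlgebra K q := (UniversalEnvelopingAlgebra.ι K : q →ₗ⁅K⁆ UniversalEnvelopingAlgebra K q) ∘ₗ P

/-- Prescribed values on sorted words. -/
noncomputable def F (w : List ι) : UniversalEnvelopingAlgebra K q := (w.map fun i => G q P (b i)).prod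

theorem F_append (a c : List ι) : F q b P (a ++ c) = F q b P a * F q b P c := by simp [F]
theorem F_cons (x : ι) (c : List ι) : F q b P (x :: c) = G q P (b x) * F q b P c := by simp [F]

theorem G_expand (A C : UniversalEnvelopingAlgebra K q) (Z : L) :
    ((b.repr Z).sum fun k s => s • (A * (G q P (b k) * C))) = A * (G q P Z * C) := by
  conv_rhs => rw [← b.linearCombination_repr Z]
  rw [Finsupp.linearCombination_apply]
  simp only [Finsupp.sum, map_sum, map_smul, Finset.mul_sum, Finset.sum_mul, mul_smul_comm,
    smul_mul_assoc]

variable (hP : ∀ z : q, P z = z) (hQ : ∀ i, Q i → b i ∈ q) (hlt : ∀ i j, ¬ Q i → Q j → i < j)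
  (hs : ∀ z ∈ q, ∀ k ∈ (b.repr z).support, Q k)

theorem G_comm (hP : ∀ z : q, P z = z) (x y : L) (hx : x ∈ q) (hy : y ∈ q) :
    G q P x * G q P y = G q P y * G q P x + G q P ⁅x, y⁆ := by
  have e1 := hP ⟨x, hx⟩
  have e2 := hP ⟨y, hy⟩
  have e3 := hP ⁅(⟨x, hx⟩ : q), (⟨y, hy⟩ : q)⁆
  simp only [LieSubalgebra.coe_bracket] at e1 e2 e3
  simp only [G, LinearMap.comp_apply, e1, e2, e3, LieHom.coe_toLinearMap, LieHom.map_lie]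
  rw [LieRing.of_associative_ring_bracket]
  abel

theorem nf_split (hP : ∀ z : q, P z = z) (hQ : ∀ i, Q i → b i ∈ q)
    (hlt : ∀ i j, ¬ Q i → Q j → i < j)
    (hs : ∀ z ∈ q, ∀ k ∈ (b.repr z).support, Q k) (s : List ι) (hs1 : s.Pairwise (· ≤ ·))
    (hs2 : ∀ i ∈ s, ¬ Q i) (t : List ι) : (∀ i ∈ t, Q i) →
    nf b (F q b P) (s ++ t) = F q b P (s ++ t) := by
  induction t using word_induction with
  | h0 t h =>
    intro ht
    apply nf_sorted
    rw [List.pairwise_append]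
    exact ⟨hs1, h, fun i hi j hj => (hlt i j (hs2 i hi) (ht j hj)).le⟩
  | h1 a x y c hxy ih1 ih2 =>
    intro ht
    have hx : Q x := ht x (by simp)
    have hy : Q y := ht y (by simp)
    have ha : ∀ i ∈ a, Q i := fun i hi => ht i (by simp [hi])
    have hc : ∀ i ∈ c, Q i := fun i hi => ht i (by simp [hi])
    rw [← List.append_assoc, nf_desc, List.append_assoc, ih1 (by
      intro i hi; simp at hi; rcases hi with h | rfl | rfl | h <;> simp_all)]
    have : ((b.repr ⁅b x, b y⁆).sum fun k r => r • nf b (F q b P) (s ++ a ++ k :: c)) =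
        (b.repr ⁅b x, b y⁆).sum fun k r => r • (F q b P (s ++ a) * (G q P (b k) * F q b P c)) := by
      apply Finsupp.sum_congr
      intro k hk
      have hk' := hs _ (q.lie_mem (hQ x hx) (hQ y hy)) k hk
      rw [List.append_assoc, ih2 k (by
        intro i hi; simp at hi; rcases hi with h | rfl | h <;> simp_all),
        ← List.append_assoc, F_append, F_cons]
    rw [this, G_expand, ← List.append_assoc]
    simp only [F_append q b P (s ++ a), F_cons]
    rw [← mul_add, ← mul_assoc (G q P (b x)), G_comm q P hP _ _ (hQ x hx) (hQ y hy)]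
    simp only [add_mul, mul_assoc]

theorem nf_right (hP : ∀ z : q, P z = z) (hQ : ∀ i, Q i → b i ∈ q)
    (hlt : ∀ i j, ¬ Q i → Q j → i < j)
    (hs : ∀ z ∈ q, ∀ k ∈ (b.repr z).support, Q k) (u : ι) (hu : Q u) (w : List ι) :
    nf b (F q b P) (w ++ [u]) = nf b (F q b P) w * G q P (b u) := by
  induction w using word_induction with
  | h0 w h =>
    obtain ⟨s, t, rfl, h1, h2, h3⟩ := sorted_split Q hlt w h
    rw [List.append_assoc, nf_split q b Q P hP hQ hlt hs s h1 h2 t h3,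
      nf_split q b Q P hP hQ hlt hs s h1 h2 (t ++ [u]) (by
        intro i hi; simp at hi; rcases hi with h | rfl <;> simp_all)]
    simp [F, mul_assoc]
  | h1 a x y c hxy ih1 ih2 =>
    simp only [List.append_assoc, List.cons_append] at ih1 ih2 ⊢
    rw [nf_desc, nf_desc b _ a x y c, ih1, add_mul]
    simp only [ih2, Finsupp.sum, Finset.sum_mul, smul_mul_assoc]

theorem R_right (hP : ∀ z : q, P z = z) (hQ : ∀ i, Q i → b i ∈ q)
    (hlt : ∀ i j, ¬ Q i → Q j → i < j)
    (hs : ∀ z ∈ q, ∀ k ∈ (b.repr z).support, Q k) (z : q) (t : TensorAlgebra K L) :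
    R b (F q b P) (t * TensorAlgebra.ι K (z : L)) =
      R b (F q b P) t * UniversalEnvelopingAlgebra.ι K z := by
  let g₁ : TensorAlgebra K L →ₗ[K] UniversalEnvelopingAlgebra K q :=
    R b (F q b P) ∘ₗ LinearMap.mulRight K (TensorAlgebra.ι K (z : L))
  let g₂ : TensorAlgebra K L →ₗ[K] UniversalEnvelopingAlgebra K q :=
    LinearMap.mulRight K (UniversalEnvelopingAlgebra.ι K z : UniversalEnvelopingAlgebra K q) ∘ₗ R b (F q b P)
  have : g₁ = g₂ := b.tensorAlgebra.ext fun w => by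
    have := basis_apply b (FreeMonoid.toList w)
    rw [FreeMonoid.ofList_toList] at this
    rw [this]
    simp only [g₁, g₂, LinearMap.comp_apply, LinearMap.mulRight_apply, R_W]
    have h := R_mid b (F q b P) (FreeMonoid.toList w) [] (z : L)
    rw [W_nil, mul_one] at h
    rw [h]
    have h2 := G_expand q b P (nf b (F q b P) (FreeMonoid.toList w)) 1 (z : L)
    rw [mul_one] at h2
    have h3 : G q P (z : L) = UniversalEnvelopingAlgebra.ι K z := by
      simp only [G, LinearMap.comp_apply, hP]; rfl
    rw [← h3, ← h2]
    apply Finsupp.sum_congr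
    intro k hk
    rw [nf_right q b Q P hP hQ hlt hs k (hs _ z.2 k hk), mul_one]
  exact LinearMap.congr_fun this t

/-- The inclusion of enveloping algebras. -/
noncomputable def incl : UniversalEnvelopingAlgebra K q →ₐ[K] UniversalEnvelopingAlgebra K L :=
  UniversalEnvelopingAlgebra.lift K ((UniversalEnvelopingAlgebra.ι K).comp q.incl)

theorem exists_retract_aux (hP : ∀ z : q, P z = z) (hQ : ∀ i, Q i → b i ∈ q)
    (hlt : ∀ i j, ¬ Q i → Q j → i < j)
    (hs : ∀ z ∈ q, ∀ k ∈ (b.repr z).support, Q k) :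
    ∃ r : UniversalEnvelopingAlgebra K L →ₗ[K] UniversalEnvelopingAlgebra K q, r 1 = 1 ∧ ∀ a u, r (a * incl q u) = r a * u := by
  let mk := UniversalEnvelopingAlgebra.mkAlgHom K L
  have hker : LinearMap.ker mk.toLinearMap ≤ LinearMap.ker (R b (F q b P)) := by
    intro t ht
    exact R_eq_zero_of_mk b _ t ht
  let e := mk.toLinearMap.quotKerEquivOfSurjective mk_surjective
  let r : UniversalEnvelopingAlgebra K L →ₗ[K] UniversalEnvelopingAlgebra K q := (LinearMap.ker mk.toLinearMap).liftQ _ hker ∘ₗ e.symm.toLinearMap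
  have hr : ∀ t, r (mk t) = R b (F q b P) t := by
    intro t
    have : e.symm (mk t) = Submodule.Quotient.mk t := by
      rw [LinearEquiv.symm_apply_eq]; rfl
    simp only [r, LinearMap.comp_apply, LinearEquiv.coe_coe, this]
    rfl
  refine ⟨r, ?_, ?_⟩
  · rw [← map_one mk, hr, ← W_nil b, R_W, nf_sorted _ _ _ (by simp)]
    rfl
  · intro a u
    obtain ⟨v, rfl⟩ := mk_surjective u
    induction v using TensorAlgebra.induction generalizing a with
    | algebraMap k =>
      rw [AlgHom.commutes, AlgHom.commutes, ← Algebra.commutes, ← Algebra.commutes,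
        ← Algebra.smul_def, ← Algebra.smul_def, map_smul]
    | ι z =>
      obtain ⟨t, rfl⟩ := mk_surjective a
      have : incl q (UniversalEnvelopingAlgebra.mkAlgHom K q (TensorAlgebra.ι K z)) =
          mk (TensorAlgebra.ι K (z : L)) := by
        rw [incl, UniversalEnvelopingAlgebra.lift_ι_apply']
        rfl
      rw [this]
      change r (mk t * _) = r (mk t) * _
      rw [← map_mul, hr, hr, R_right q b Q P hP hQ hlt hs]
      rfl
    | mul x y hx hy =>
      rw [map_mul (UniversalEnvelopingAlgebra.mkAlgHom K q), map_mul (incl q), ← mul_assoc, hy, hx, mul_assoc]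
    | add x y hx hy => rw [map_add, map_add, mul_add, map_add, hx, hy, mul_add]

end retract

section final
variable {K L : Type*} [Field K] [LieRing L] [LieAlgebra K L]

theorem exists_retract (q : LieSubalgebra K L) :
    ∃ r : UniversalEnvelopingAlgebra K L →ₗ[K] UniversalEnvelopingAlgebra K q,
      r 1 = 1 ∧ ∀ a u, r (a * incl q u) = r a * u := by
  obtain ⟨V, hV⟩ := Submodule.exists_isCompl q.toSubmodule
  let bq := Basis.ofVectorSpace K q.toSubmodule
  let bV := Basis.ofVectorSpace K V
  let _ : LinearOrder (Basis.ofVectorSpaceIndex K q.toSubmodule) :=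
    IsWellOrder.linearOrder WellOrderingRel
  let _ : LinearOrder (Basis.ofVectorSpaceIndex K V) :=
    IsWellOrder.linearOrder WellOrderingRel
  let e := Submodule.prodEquivOfIsCompl V q.toSubmodule hV.symm
  let b := ((bV.prod bq).map e).reindex toLex
  have hbl : ∀ i, b (Sum.inlₗ i) = bV i := by
    intro i
    simp [b, e, Sum.inlₗ]
  have hbr : ∀ i, b (Sum.inrₗ i) = bq i := by
    intro i
    simp [b, e, Sum.inrₗ]
  let P : L →ₗ[K] q.toSubmodule := LinearMap.snd K V q.toSubmodule ∘ₗ e.symm.toLinearMap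
  have hP : ∀ z : q.toSubmodule, P z = z := by
    intro z
    simp [P, e]
  refine exists_retract_aux q b (fun i => (ofLex i).isRight) P hP ?_ ?_ ?_
  · intro i hi
    match i, hi with
    | Sum.inrₗ i, _ => rw [hbr]; exact (bq i).2
  · intro i j hi hj
    match i, j, hi, hj with
    | Sum.inlₗ i, Sum.inrₗ j, _, _ => exact Sum.Lex.inl_lt_inr _ _
  · intro z hz k hk
    match k, hk with
    | Sum.inrₗ i, _ => rfl
    | Sum.inlₗ i, hk =>
      exfalso
      rw [Finsupp.mem_support_iff] at hk
      apply hk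
      have : e.symm z = (0, ⟨z, hz⟩) := by
        rw [LinearEquiv.symm_apply_eq]; simp [e]
      simp [b, Sum.inlₗ, this]

theorem noeth_sub (h : IsNoetherianRing (UniversalEnvelopingAlgebra K L))
    (q : LieSubalgebra K L) : IsNoetherianRing (UniversalEnvelopingAlgebra K q) := by
  obtain ⟨r, h1, h2⟩ := exists_retract q
  have key : ∀ I : Ideal (UniversalEnvelopingAlgebra K q),
      (I.map (incl q)).comap (incl q) = I := by
    intro I
    apply le_antisymm _ Ideal.le_comap_map
    intro x hx
    have hr : ∀ a ∈ I.map (incl q), ∀ c, r (c * a) ∈ I := by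
      intro a ha
      induction ha using Submodule.span_induction with
      | mem a ha =>
        obtain ⟨u, hu, rfl⟩ := ha
        intro c
        rw [h2]
        exact I.mul_mem_left _ hu
      | zero => simp
      | add a d _ _ ha hd =>
        intro c
        rw [mul_add, map_add]; exact I.add_mem (ha c) (hd c)
      | smul a d _ hd =>
        intro c
        rw [smul_eq_mul, ← mul_assoc]; exact hd _
    have := hr _ hx 1
    rw [one_mul] at this
    have h3 := h2 1 x
    rw [one_mul, h1, one_mul] at h3
    rwa [h3] at this
  rw [isNoetherianRing_iff, isNoetherian_iff'] at h ⊢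
  have hinj : StrictMono (fun I : Ideal (UniversalEnvelopingAlgebra K q) => I.map (incl q)) := by
    refine Monotone.strictMono_of_injective (fun I J h => Ideal.map_mono h) ?_
    exact Function.LeftInverse.injective key
  exact hinj.wellFoundedGT

theorem noeth_quot (q : Type*) [LieRing q] [LieAlgebra K q] (m : LieIdeal K q)
    (hq : IsNoetherianRing (UniversalEnvelopingAlgebra K q)) :
    IsNoetherianRing (UniversalEnvelopingAlgebra K (q ⧸ m)) := by
  let pr : q →ₗ⁅K⁆ (q ⧸ m) :=
    { (LieSubmodule.Quotient.mk' m : q →ₗ[K] q ⧸ m) with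
      map_lie' := fun {x y} => LieSubmodule.Quotient.mk_bracket m x y }
  let π : UniversalEnvelopingAlgebra K q →ₐ[K] UniversalEnvelopingAlgebra K (q ⧸ m) :=
    UniversalEnvelopingAlgebra.lift K
      ((UniversalEnvelopingAlgebra.ι K).comp pr)
  refine isNoetherianRing_of_surjective _ _ π.toRingHom ?_
  intro u
  obtain ⟨v, rfl⟩ := mk_surjective u
  change ∃ a, π a = _
  induction v using TensorAlgebra.induction with
  | algebraMap k => exact ⟨algebraMap K _ k, by rw [AlgHom.commutes, AlgHom.commutes]⟩
  | ι z =>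
    obtain ⟨y, rfl⟩ := LieSubmodule.Quotient.surjective_mk' m z
    exact ⟨UniversalEnvelopingAlgebra.ι K y, by
      simp only [π]
      rw [UniversalEnvelopingAlgebra.lift_ι_apply]
      rfl⟩
  | mul x y hx hy =>
    obtain ⟨x', hx⟩ := hx
    obtain ⟨y', hy⟩ := hy
    exact ⟨x' * y', by rw [map_mul, map_mul, hx, hy]⟩
  | add x y hx hy =>
    obtain ⟨x', hx⟩ := hx
    obtain ⟨y', hy⟩ := hy
    exact ⟨x' + y', by rw [map_add, map_add, hx, hy]⟩

end final
end PBW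

/-- If `U(L)` is left Noetherian then the enveloping algebra of any section `q ⧸ m`
of `L` (with `q` a Lie subalgebra of `L` and `m` a Lie ideal of `q`) is left Noetherian. -/
theorem noetherian_uea_section
    (K : Type*) [Field K] [CharZero K]
    (L : Type*) [LieRing L] [LieAlgebra K L]
    (hNoeth : IsNoetherianRing (UniversalEnvelopingAlgebra K L))
    (q : LieSubalgebra K L) (m : LieIdeal K q) :
    IsNoetherianRing (UniversalEnvelopingAlgebra K (q ⧸ m)) := by
  exact PBW.noeth_quot q m (PBW.noeth_sub hNoeth q)
end

section
/- Let L be a Z^n-graded Lie algebra over a field K of characteristic 0 with finite-dimensional homogeneous components, which is graded-simple but not simple as a Lie algebra. Then L contains an infinite-dimensional abelian Lie subalgebra; consequently U(L) is not left Noetherian. -/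
set_option linter.unusedSectionVars false
open Filter

section core
variable {K R : Type*} [Field K] [CharZero K] [CommRing R] [Algebra K R]

/-- sequences vanishing to infinite order at `ε` -/
def gsnJ (m : Ideal R) : Ideal (ℕ → R) where
  carrier := {s | ∀ M : ℕ, ∀ᶠ N in atTop, s N ∈ m ^ M}
  add_mem' := by
    intro a b ha hb M
    filter_upwards [ha M, hb M] with N h1 h2 using add_mem h1 h2
  zero_mem' := by
    intro M
    exact Eventually.of_forall fun N => zero_mem _
  smul_mem' := by
    intro c s hs M
    filter_upwards [hs M] with N h1 using Ideal.mul_mem_left _ _ h1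

lemma gsnJ_mem {m : Ideal R} {s : ℕ → R} :
    s ∈ gsnJ m ↔ ∀ M : ℕ, ∀ᶠ N in atTop, s N ∈ m ^ M := Iff.rfl

lemma gsn_der_pow (m : Ideal R) (d : Derivation K R R) (M : ℕ) :
    ∀ x ∈ m ^ (M + 1), d x ∈ m ^ M := by
  induction M with
  | zero => intro x _; simp
  | succ M ih =>
    intro x hx
    rw [pow_succ] at hx
    refine Submodule.mul_induction_on hx ?_ ?_
    · intro a ha b hb
      rw [Derivation.leibniz]
      refine add_mem ?_ ?_
      · exact Ideal.mul_mem_right _ _ ha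
      · rw [smul_eq_mul, mul_comm, pow_succ]
        exact Ideal.mul_mem_mul (ih a ha) hb
    · intro a b ha hb
      rw [map_add]; exact add_mem ha hb

/-- pointwise derivation on sequences -/
def gsnD (d : Derivation K R R) : Derivation K (ℕ → R) (ℕ → R) :=
  Derivation.mk' (LinearMap.pi fun N => d.toLinearMap ∘ₗ LinearMap.proj N) (by
    intro a b
    ext N
    simp)

lemma gsnD_apply (d : Derivation K R R) (s : ℕ → R) (N : ℕ) : gsnD d s N = d (s N) := rfl

lemma gsnD_J (m : Ideal R) (d : Derivation K R R) {s : ℕ → R} (hs : s ∈ gsnJ m) :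
    gsnD d s ∈ gsnJ m := by
  intro M
  filter_upwards [hs (M + 1)] with N h using gsn_der_pow m d M _ h

lemma gsn_sum_J (m : Ideal R) (g : ℕ → ℕ → R) (hg : ∀ n, g n ∈ gsnJ m)
    (hg2 : ∀ n N, g (n + 1) N ∈ m ^ n) :
    (fun N => ∑ n ∈ Finset.range (N + 2), g n N) ∈ gsnJ m := by
  intro M
  have h1 : ∀ᶠ N in atTop, ∀ n ∈ Finset.range (M + 1), g n N ∈ m ^ M := by
    rw [Filter.eventually_all_finset]
    intro n _
    exact hg n M
  filter_upwards [h1] with N h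
  refine sum_mem fun n _ => ?_
  by_cases hn : n < M + 1
  · exact h n (by simpa using hn)
  · obtain ⟨l, rfl⟩ : ∃ l, n = l + 1 := ⟨n - 1, by omega⟩
    exact Ideal.pow_le_pow_right (by omega) (hg2 l N)

lemma gsn_der_term (d : Derivation K R R) (a : K) (t g : R) (n : ℕ) :
    d (a • (t ^ (n + 1) * g)) =
      ((n + 1 : K) * a) • (t ^ n * d t * g) + a • (t ^ (n + 1) * d g) := by
  rw [Derivation.map_smul, Derivation.leibniz, Derivation.leibniz_pow]
  rw [nsmul_eq_mul]
  simp only [smul_eq_mul, Algebra.smul_def, map_mul, map_add, map_natCast, map_one,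
    Nat.add_sub_cancel]
  push_cast
  ring

lemma gsn_step (ε : R →ₐ[K] K) (d : ℕ → Derivation K R R)
    (hcomm : ∀ i j r, d i (d j r) = d j (d i r)) (k : ℕ) (t : ℕ → ℕ → R)
    (h0 : ∀ j N, ε (t j N) = 0)
    (h1 : ∀ i < k, ∀ j ≥ k, gsnD (d i) (t j) ∈ gsnJ (RingHom.ker ε))
    (h2 : ∀ i ≥ k, ∀ j ≥ k, ∀ N, ε (d i (t j N)) = if i = j then 1 else 0) :
    ∃ t' : ℕ → ℕ → R, (∀ j N, ε (t' j N) = 0) ∧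
      (∀ i < k + 1, ∀ j ≥ k + 1, gsnD (d i) (t' j) ∈ gsnJ (RingHom.ker ε)) ∧
      (∀ i ≥ k + 1, ∀ j ≥ k + 1, ∀ N, ε (d i (t' j N)) = if i = j then 1 else 0) := by
  set m : Ideal R := RingHom.ker ε with hm
  set c : ℕ → R := gsnD (d k) (t k) with hc
  have hc1 : ∀ N, 1 - c N ∈ m := by
    intro N
    rw [hm, RingHom.mem_ker, map_sub, map_one, hc, gsnD_apply, h2 k le_rfl k le_rfl]
    simp
  have htm : ∀ N, t k N ∈ m := fun N => h0 k N
  set e : ℕ → R := fun N => ∑ n ∈ Finset.range (N + 1), (1 - c N) ^ n with he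
  have hec : 1 - e * c ∈ gsnJ m := by
    intro M
    filter_upwards [eventually_ge_atTop M] with N hN
    have : (1 - e * c) N = (1 - c N) ^ (N + 1) := by
      have h := geom_sum_mul_neg (1 - c N) (N + 1)
      simp only [sub_sub_cancel] at h
      simp only [Pi.sub_apply, Pi.one_apply, Pi.mul_apply, he]
      rw [h]; ring
    rw [this]
    exact Ideal.pow_le_pow_right (by omega) (Ideal.pow_mem_pow (hc1 N) _)
  have cancel_e : ∀ s : ℕ → R, s * c ∈ gsnJ m → s ∈ gsnJ m := by
    intro s hs
    have : s = e * (s * c) + s * (1 - e * c) := by ring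
    rw [this]
    exact add_mem (Ideal.mul_mem_left _ _ hs) (Ideal.mul_mem_left _ _ hec)
  have cancel_c : ∀ s : ℕ → R, e * s ∈ gsnJ m → s ∈ gsnJ m := by
    intro s hs
    have : s = c * (e * s) + s * (1 - e * c) := by ring
    rw [this]
    exact add_mem (Ideal.mul_mem_left _ _ hs) (Ideal.mul_mem_left _ _ hec)
  have hDcomm : ∀ i j s, gsnD (d i) (gsnD (d j) s) = gsnD (d j) (gsnD (d i) s) := by
    intro i j s
    funext N
    simp only [gsnD_apply, hcomm]
  have hDc : ∀ i < k, gsnD (d i) c ∈ gsnJ m := by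
    intro i hi
    rw [hc, hDcomm]
    exact gsnD_J m _ (h1 i hi k le_rfl)
  have hDe : ∀ i < k, gsnD (d i) e ∈ gsnJ m := by
    intro i hi
    apply cancel_e
    have h := gsnD_J m (d i) hec
    rw [map_sub, Derivation.leibniz, Derivation.map_one_eq_zero] at h
    have h3 := add_mem h (Ideal.mul_mem_left _ e (hDc i hi))
    have h4 := neg_mem h3
    convert h4 using 1
    simp only [smul_eq_mul]
    ring
  -- the normalised derivation
  let del : (ℕ → R) → (ℕ → R) := fun s => e * gsnD (d k) s
  have hdel : ∀ i < k, ∀ s, gsnD (d i) s ∈ gsnJ m → gsnD (d i) (del s) ∈ gsnJ m := by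
    intro i hi s hs
    change gsnD (d i) (e * gsnD (d k) s) ∈ _
    rw [Derivation.leibniz, hDcomm]
    refine add_mem (Ideal.mul_mem_left _ _ (gsnD_J m _ hs)) ?_
    exact Ideal.mul_mem_left _ _ (hDe i hi)
  have hdeln : ∀ i < k, ∀ s, gsnD (d i) s ∈ gsnJ m → ∀ n, gsnD (d i) (del^[n] s) ∈ gsnJ m := by
    intro i hi s hs n
    induction n with
    | zero => exact hs
    | succ n ih => rw [Function.iterate_succ_apply']; exact hdel i hi _ ih
  let a : ℕ → K := fun n => (-1) ^ n * ((n.factorial : K))⁻¹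
  have ha : ∀ n : ℕ, ((n : K) + 1) * a (n + 1) = - a n := by
    intro n
    simp only [a, Nat.factorial_succ]
    have : (n.factorial : K) ≠ 0 := by exact_mod_cast Nat.factorial_ne_zero n
    have : ((n : K) + 1) ≠ 0 := by exact_mod_cast Nat.succ_ne_zero n
    push_cast
    field_simp
    ring
  let term : (ℕ → R) → ℕ → ℕ → R := fun s n => a n • ((t k) ^ n * del^[n] s)
  let P : (ℕ → R) → ℕ → R := fun s N => ∑ n ∈ Finset.range (N + 2), term s n N
  have hDterm : ∀ i s n, gsnD (d i) (term s (n + 1)) =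
      (- a n) • ((t k) ^ n * gsnD (d i) (t k) * del^[n+1] s)
        + a (n + 1) • ((t k) ^ (n + 1) * gsnD (d i) (del^[n+1] s)) := by
    intro i s n
    rw [← ha]
    exact gsn_der_term _ _ _ _ _
  have hDP : ∀ i s, gsnD (d i) (P s) =
      fun N => ∑ n ∈ Finset.range (N + 2), gsnD (d i) (term s n) N := by
    intro i s
    funext N
    simp only [gsnD_apply, P, map_sum]
  have hsm : ∀ (I : Ideal R) (b : K) (x : R), x ∈ I → b • x ∈ I := by
    intro I b x hx
    rw [Algebra.smul_def]; exact Ideal.mul_mem_left _ _ hx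
  have hsmJ : ∀ (b : K) (x : ℕ → R), x ∈ gsnJ m → b • x ∈ gsnJ m := by
    intro b x hx
    rw [Algebra.smul_def]; exact Ideal.mul_mem_left _ _ hx
  have hterm0 : ∀ s, term s 0 = s := by
    intro s; simp [term, a]
  refine ⟨fun j => if k + 1 ≤ j then P (t j) else 0, ?_, ?_, ?_⟩
  · intro j N
    by_cases hj : k + 1 ≤ j
    · simp only [if_pos hj]
      change ε (∑ n ∈ Finset.range (N + 2), term (t j) n N) = 0
      rw [map_sum]
      refine Finset.sum_eq_zero fun n _ => ?_
      rcases n with _ | n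
      · rw [hterm0]; exact h0 j N
      · simp [term, h0]
    · simp [hj]
  · intro i hi j hj
    simp only [if_pos (show k + 1 ≤ j from hj)]
    rcases Nat.lt_succ_iff_lt_or_eq.mp hi with hi | rfl
    · rw [hDP]
      apply gsn_sum_J
      · intro n
        rcases n with _ | n
        · rw [hterm0]; exact h1 i hi j (by omega)
        · rw [hDterm]
          refine add_mem (hsmJ _ _ ?_) (hsmJ _ _ ?_)
          · exact Ideal.mul_mem_right _ _ (Ideal.mul_mem_left _ _ (h1 i hi k le_rfl))
          · exact Ideal.mul_mem_left _ _ (hdeln i hi _ (h1 i hi j (by omega)) _)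
      · intro n N
        rw [hDterm]
        refine add_mem (hsm _ _ _ ?_) (hsm _ _ _ ?_)
        · exact Ideal.mul_mem_right _ _ (Ideal.mul_mem_right _ _ (Ideal.pow_mem_pow (htm N) _))
        · exact Ideal.mul_mem_right _ _ (Ideal.pow_le_pow_right (by omega)
            (Ideal.pow_mem_pow (htm N) (n + 1)))
    · -- telescoping
      apply cancel_c
      let h : ℕ → ℕ → R := fun n => a n • ((t i) ^ n * del^[n+1] (t j))
      have key0 : e * gsnD (d i) (term (t j) 0) = h 0 := by
        rw [hterm0]
        simp [h, a, del]
      have key : ∀ n, e * gsnD (d i) (term (t j) (n + 1)) = (h (n + 1) - h n) + (1 - e * c) * h n := by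
        intro n
        rw [hDterm, ← hc]
        simp only [h]
        rw [Function.iterate_succ_apply' del (n + 1)]
        change _ = a (n+1) • (t i ^ (n+1) * (e * gsnD (d i) (del^[n+1] (t j)))) - _ + _
        simp only [Algebra.smul_def, map_neg]
        ring
      have tel : ∀ M, ∑ n ∈ Finset.range (M + 1), e * gsnD (d i) (term (t j) n) =
          h M + (1 - e * c) * ∑ n ∈ Finset.range M, h n := by
        intro M
        induction M with
        | zero => simp [key0]
        | succ M ih =>
          rw [Finset.sum_range_succ, ih, key, Finset.sum_range_succ _ M]
          ring
      have tot : e * gsnD (d i) (P (t j)) = (fun N => h (N + 1) N) +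
          (1 - e * c) * (fun N => ∑ n ∈ Finset.range (N + 1), h n N) := by
        funext N
        have := congrFun (tel (N + 1)) N
        rw [hDP]
        simp only [Finset.sum_apply, Pi.mul_apply, Pi.add_apply, Finset.mul_sum] at this ⊢
        exact this
      rw [tot]
      refine add_mem ?_ (Ideal.mul_mem_right _ _ hec)
      intro M
      filter_upwards [eventually_ge_atTop M] with N hN
      refine hsm _ _ _ (Ideal.mul_mem_right _ _ ?_)
      exact Ideal.pow_le_pow_right (by omega) (Ideal.pow_mem_pow (htm N) (N + 1))
  · intro i hi j hj N
    simp only [if_pos (show k + 1 ≤ j from hj)]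
    have := congrFun (hDP i (t j)) N
    rw [gsnD_apply] at this
    rw [this, map_sum, Finset.sum_range_succ']
    rw [hterm0, gsnD_apply, h2 i (by omega) j (by omega), Finset.sum_eq_zero, zero_add]
    intro n _
    rw [hDterm]
    have h3 := h2 i (by omega) k le_rfl N
    rw [if_neg (by omega)] at h3
    simp [h0, gsnD_apply, h3]

lemma gsn_core (ε : R →ₐ[K] K) (d : ℕ → Derivation K R R)
    (hcomm : ∀ i j r, d i (d j r) = d j (d i r)) (t : ℕ → R)
    (ht : ∀ i j, ε (d i (t j)) = if i = j then 1 else 0) (k : ℕ) :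
    ∃ f : ℕ → R, (∀ i < k, gsnD (d i) f ∈ gsnJ (RingHom.ker ε)) ∧
      ∀ N, ε (d k (f N)) = 1 := by
  have : ∃ t' : ℕ → ℕ → R, (∀ j N, ε (t' j N) = 0) ∧
      (∀ i < k, ∀ j ≥ k, gsnD (d i) (t' j) ∈ gsnJ (RingHom.ker ε)) ∧
      (∀ i ≥ k, ∀ j ≥ k, ∀ N, ε (d i (t' j N)) = if i = j then 1 else 0) := by
    induction k with
    | zero =>
      refine ⟨fun j _ => t j - algebraMap K R (ε (t j)), ?_, ?_, ?_⟩
      · intro j N; simp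
      · intro i hi; omega
      · intro i _ j _ N; simp [ht]
    | succ k ih =>
      obtain ⟨t', a, b, c⟩ := ih
      exact gsn_step ε d hcomm k t' a b c
  obtain ⟨t', a, b, c⟩ := this
  refine ⟨t' k, fun i hi => b i hi k le_rfl, fun N => ?_⟩
  rw [c k le_rfl k le_rfl]; simp
end core
section env
attribute [local instance] LieRing.ofAssociativeRing
variable {K L : Type*} [Field K] [CharZero K] [LieRing L] [LieAlgebra K L]

/-- The action of `L` by derivations on a polynomial ring, extending left multiplication. -/
lemma gsn_exists_action.{v} {V : Type v} [AddCommGroup V] [Module K V]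
    (ρ : L →ₗ⁅K⁆ Module.End K V) (lam : V →ₗ[K] K) :
    ∃ (σ : Type v) (j : V →ₗ[K] MvPolynomial σ K) (D : L →ₗ⁅K⁆ Module.End K (MvPolynomial σ K))
      (d : L → Derivation K (MvPolynomial σ K) (MvPolynomial σ K))
      (ε : MvPolynomial σ K →ₐ[K] K),
      (∀ x r, D x r = d x r) ∧ (∀ x v, d x (j v) = j (ρ x v)) ∧ ∀ v, ε (j v) = lam v := by
  classical
  let b := Module.Basis.ofVectorSpace K V
  let σ := Module.Basis.ofVectorSpaceIndex K V
  let j : V →ₗ[K] MvPolynomial σ K := b.constr K (fun i => MvPolynomial.X i)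
  have hj : ∀ i, j (b i) = MvPolynomial.X i := fun i => b.constr_basis K _ i
  let d : L → Derivation K (MvPolynomial σ K) (MvPolynomial σ K) := fun x =>
    MvPolynomial.mkDerivation K fun i => j (ρ x (b i))
  have hd : ∀ x v, d x (j v) = j (ρ x v) := by
    intro x v
    have : (d x).toLinearMap ∘ₗ j = j ∘ₗ ρ x := by
      refine b.ext fun i => ?_
      simp only [LinearMap.comp_apply, hj]
      exact MvPolynomial.mkDerivation_X K _ i
    exact LinearMap.congr_fun this v
  have hX : ∀ x i, d x (MvPolynomial.X i) = j (ρ x (b i)) := fun x i => by rw [← hj, hd]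
  have hadd : ∀ x y, d (x + y) = d x + d y := by
    intro x y
    apply MvPolynomial.derivation_ext
    intro i
    simp [hX]
  have hsmul : ∀ (a : K) x, d (a • x) = a • d x := by
    intro a x
    apply MvPolynomial.derivation_ext
    intro i
    simp [hX]
  have hlie : ∀ x y, d ⁅x, y⁆ = ⁅d x, d y⁆ := by
    intro x y
    apply MvPolynomial.derivation_ext
    intro i
    rw [Derivation.commutator_apply, hX, hX, hX, hd, hd, LieHom.map_lie, Ring.lie_def]
    simp
  let D : L →ₗ⁅K⁆ Module.End K (MvPolynomial σ K) :=
    { toFun := fun x => (d x).toLinearMap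
      map_add' := fun x y => by ext1 r; simp [hadd]
      map_smul' := fun a x => by ext1 r; simp [hsmul]
      map_lie' := fun {x y} => by
        apply LinearMap.ext
        intro r
        rw [Ring.lie_def]
        simp only [hlie]
        exact Derivation.commutator_apply (D1 := d x) (D2 := d y) r }
  refine ⟨σ, j, D, d, MvPolynomial.aeval (fun i => lam (b i)), fun x r => rfl, hd, ?_⟩
  intro v
  have : (MvPolynomial.aeval (R := K) (fun i => lam (b i))).toLinearMap ∘ₗ j = lam := by
    refine b.ext fun i => ?_
    simp [hj]
  exact LinearMap.congr_fun this v

lemma gsn_U_induction (S : Subalgebra K (UniversalEnvelopingAlgebra K L))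
    (h : ∀ x : L, UniversalEnvelopingAlgebra.ι K x ∈ S) (w : UniversalEnvelopingAlgebra K L) :
    w ∈ S := by
  let f : L →ₗ⁅K⁆ S :=
    { toFun := fun x => ⟨UniversalEnvelopingAlgebra.ι K x, h x⟩
      map_add' := fun x y => by ext; simp
      map_smul' := fun a x => by ext; simp
      map_lie' := fun {x y} => by
        ext
        rw [Ring.lie_def]
        simp only [LieHom.map_lie, Ring.lie_def]
        rfl }
  have : S.val.comp (UniversalEnvelopingAlgebra.lift K f) = AlgHom.id K _ := by
    apply UniversalEnvelopingAlgebra.hom_ext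
    ext x
    change ((UniversalEnvelopingAlgebra.lift K f (UniversalEnvelopingAlgebra.ι K x) : S) :
      UniversalEnvelopingAlgebra K L) = UniversalEnvelopingAlgebra.ι K x
    rw [UniversalEnvelopingAlgebra.lift_ι_apply]
    rfl
  have h2 := AlgHom.congr_fun this w
  have h3 : ((UniversalEnvelopingAlgebra.lift K f w : S) : UniversalEnvelopingAlgebra K L) = w := h2
  rw [← h3]
  exact Subtype.property _

lemma gsn_exists_dual {V : Type*} [AddCommGroup V] [Module K V] (v : ℕ → V)
    (hv : LinearIndependent K v) :
    ∃ l : ℕ → V →ₗ[K] K, ∀ i j, l j (v i) = if i = j then 1 else 0 := by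
  have : ∀ j, ∃ l : V →ₗ[K] K, ∀ i, l (v i) = if i = j then 1 else 0 := by
    intro j
    obtain ⟨g, hg⟩ := LinearMap.exists_extend
      ((Finsupp.lapply j : (ℕ →₀ K) →ₗ[K] K) ∘ₗ hv.repr)
    refine ⟨g, fun i => ?_⟩
    have hi : v i ∈ Submodule.span K (Set.range v) := Submodule.subset_span ⟨i, rfl⟩
    have h1 := LinearMap.congr_fun hg ⟨v i, hi⟩
    simp only [LinearMap.comp_apply, Submodule.subtype_apply] at h1
    rw [h1, hv.repr_eq_single i _ rfl]
    simp [Finsupp.single_apply]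
  choose l hl using this
  exact ⟨l, fun i j => hl j i⟩

lemma gsn_not_noetherian (u : ℕ → L) (hu : ∀ i j, ⁅u i, u j⁆ = 0)
    (hli : LinearIndependent K (fun i => UniversalEnvelopingAlgebra.ι K (u i))) :
    ¬ IsNoetherianRing (UniversalEnvelopingAlgebra K L) := by
  intro hN
  set U := UniversalEnvelopingAlgebra K L with hU
  let J : ℕ →o Ideal U :=
    ⟨fun k => Ideal.span ((fun i => UniversalEnvelopingAlgebra.ι K (u i)) '' Set.Iio k), by
      intro a b hab
      exact Ideal.span_mono (Set.image_mono (Set.Iio_subset_Iio hab))⟩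
  obtain ⟨k, hk⟩ := monotone_stabilizes_iff_noetherian.mpr hN J
  have hmem : UniversalEnvelopingAlgebra.ι K (u k) ∈ J k := by
    rw [hk (k + 1) (by omega)]
    exact Ideal.subset_span ⟨k, by simp, rfl⟩
  obtain ⟨l, hl⟩ := gsn_exists_dual _ hli
  let lam : (ℕ →₀ U) →ₗ[K] K := Finsupp.lsum K l
  let ρ : L →ₗ⁅K⁆ Module.End K (ℕ →₀ U) :=
    ((Algebra.lsmul K K (ℕ →₀ U) : U →ₐ[K] Module.End K (ℕ →₀ U)) :
      U →ₗ⁅K⁆ Module.End K (ℕ →₀ U)).comp (UniversalEnvelopingAlgebra.ι K)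
  have hρ : ∀ x v, ρ x v = UniversalEnvelopingAlgebra.ι K x • v := fun x v => rfl
  obtain ⟨σ, j, D, d, ε, hD, hdj, hε⟩ := gsn_exists_action ρ lam
  have hcomm : ∀ i i' r, d (u i) (d (u i') r) = d (u i') (d (u i) r) := by
    intro i i' r
    have h1 := D.map_lie (u i) (u i')
    rw [hu, map_zero, Ring.lie_def] at h1
    have h2 := LinearMap.congr_fun h1 r
    simp only [LinearMap.zero_apply, LinearMap.sub_apply, Module.End.mul_apply, hD] at h2
    exact (sub_eq_zero.mp h2.symm)
  obtain ⟨f, hf1, hf2⟩ := gsn_core ε (fun i => d (u i)) hcomm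
    (fun i => j (Finsupp.single i 1)) (by
      intro i i'
      rw [hdj, hε, hρ, Finsupp.smul_single, smul_eq_mul, mul_one]
      simp only [lam, Finsupp.lsum_single]
      exact hl i i') k
  let Φ := UniversalEnvelopingAlgebra.lift K D
  have hΦ : ∀ x, Φ (UniversalEnvelopingAlgebra.ι K x) = D x :=
    UniversalEnvelopingAlgebra.lift_ι_apply K D
  let m := RingHom.ker ε
  let S : Subalgebra K U :=
    { carrier := {w | ∀ s ∈ gsnJ m, (fun N => Φ w (s N)) ∈ gsnJ m}
      mul_mem' := by
        intro a b ha hb s hs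
        have := ha _ (hb s hs)
        simpa using this
      add_mem' := by
        intro a b ha hb s hs
        have := add_mem (ha s hs) (hb s hs)
        convert this using 1
        funext N
        simp
      algebraMap_mem' := by
        intro a s hs
        have := Ideal.mul_mem_left _ (algebraMap K (ℕ → MvPolynomial σ K) a) hs
        convert this using 1
        funext N
        rw [AlgHom.commutes, Module.algebraMap_end_apply, Algebra.smul_def]
        rfl }
  have hS : ∀ w, w ∈ S := by
    apply gsn_U_induction
    intro x s hs
    have := gsnD_J m (d x) hs
    convert this using 1
    funext N
    rw [hΦ, hD]
    rfl
  have hJ : ∀ z ∈ J k, (fun N => Φ z (f N)) ∈ gsnJ m := by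
    intro z hz
    refine Submodule.span_induction ?_ ?_ ?_ ?_ hz
    · rintro _ ⟨i, hi, rfl⟩
      have := hf1 i hi
      convert this using 1
      funext N
      simp only [hΦ, hD]
      rfl
    · simp only [map_zero, LinearMap.zero_apply]
      exact zero_mem _
    · intro a b _ _ ha hb
      have := add_mem ha hb
      convert this using 1
      funext N
      simp
    · intro w z _ hz
      have := hS w _ hz
      simpa using this
  have h1 := hJ _ hmem 1
  obtain ⟨N, hN1⟩ := h1.exists
  simp only [pow_one, hΦ, hD] at hN1
  have h2 : ε (d (u k) (f N)) = 0 := hN1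
  rw [hf2] at h2
  exact one_ne_zero h2

lemma gsn_li_U (u : ℕ → L) (hli : LinearIndependent K u)
    (hcen : ∀ x : L, (∀ y : L, ⁅x, y⁆ = 0) → x = 0) :
    LinearIndependent K (fun i => UniversalEnvelopingAlgebra.ι K (u i)) := by
  have hinj : Function.Injective
      ((LieAlgebra.ad K L : L →ₗ⁅K⁆ Module.End K L) : L →ₗ[K] Module.End K L) := by
    rw [← LinearMap.ker_eq_bot, LinearMap.ker_eq_bot']
    intro x hx
    exact hcen x fun y => LinearMap.congr_fun hx y
  have h1 := hli.map' _ (LinearMap.ker_eq_bot.mpr hinj)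
  refine LinearIndependent.of_comp
    (UniversalEnvelopingAlgebra.lift K (LieAlgebra.ad K L)).toLinearMap ?_
  have h2 : ((UniversalEnvelopingAlgebra.lift K (LieAlgebra.ad K L)).toLinearMap ∘
      fun i => UniversalEnvelopingAlgebra.ι K (u i)) =
      ((LieAlgebra.ad K L : L →ₗ⁅K⁆ Module.End K L) : L →ₗ[K] Module.End K L) ∘ u := by
    funext p
    exact UniversalEnvelopingAlgebra.lift_ι_apply K (LieAlgebra.ad K L) (u p)
  rw [h2]
  exact h1
end env
section graded
variable {K L : Type*} [Field K] [LieRing L] [LieAlgebra K L] {n : ℕ}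

lemma gsn_exists_proj (comp : (Fin n → ℤ) → Submodule K L) (hint : DirectSum.IsInternal comp) :
    ∃ π : (Fin n → ℤ) → L →ₗ[K] L, (∀ a x, π a x ∈ comp a) ∧
      (∀ a, ∀ x ∈ comp a, π a x = x) ∧ (∀ a b, a ≠ b → ∀ x ∈ comp a, π b x = 0) ∧
      (∀ x, {a | π a x ≠ 0}.Finite) ∧
      (∀ (x : L) (p : Submodule K L), (∀ a, π a x ∈ p) → x ∈ p) := by
  classical
  letI := hint.chooseDecomposition
  refine ⟨fun a => (comp a).subtype ∘ₗ (DirectSum.component K _ _ a) ∘ₗ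
    (DirectSum.decomposeLinearEquiv comp).toLinearMap, ?_, ?_, ?_, ?_, ?_⟩
  · intro a x
    exact Subtype.property _
  · intro a x hx
    exact DirectSum.decompose_of_mem_same comp hx
  · intro a b hab x hx
    exact DirectSum.decompose_of_mem_ne comp hx hab
  · intro x
    refine (DFinsupp.support (DirectSum.decompose comp x)).finite_toSet.subset ?_
    intro a ha
    simp only [Finset.mem_coe, DFinsupp.mem_support_toFun]
    intro h
    apply ha
    change ((DirectSum.decompose comp x a : comp a) : L) = 0
    rw [h]; rfl
  · intro x p hp
    rw [← DirectSum.sum_support_decompose comp x]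
    exact sum_mem fun a _ => hp a

lemma gsn_bracket_proj (comp : (Fin n → ℤ) → Submodule K L) (hint : DirectSum.IsInternal comp)
    (hbr : ∀ a b : Fin n → ℤ, ∀ x ∈ comp a, ∀ y ∈ comp b, ⁅x, y⁆ ∈ comp (a + b))
    (π : (Fin n → ℤ) → L →ₗ[K] L)
    (h1 : ∀ a, ∀ x ∈ comp a, π a x = x) (h2 : ∀ a b, a ≠ b → ∀ x ∈ comp a, π b x = 0)
    (b : Fin n → ℤ) (z : L) (hz : z ∈ comp b) (a : Fin n → ℤ) (y : L) :
    π a ⁅z, y⁆ = ⁅z, π (a - b) y⁆ := by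
  have hy : y ∈ ⨆ i, comp i := by rw [hint.submodule_iSup_eq_top]; trivial
  refine Submodule.iSup_induction comp (motive := fun y => π a ⁅z, y⁆ = ⁅z, π (a - b) y⁆) hy
    ?_ ?_ ?_
  · intro i x hx
    by_cases h : a = b + i
    · subst h
      rw [h1 _ _ (hbr b i z hz x hx), add_sub_cancel_left, h1 _ _ hx]
    · rw [h2 (b + i) a (Ne.symm h) _ (hbr b i z hz x hx), h2 i (a - b) ?_ x hx, lie_zero]
      rintro rfl
      exact h (by abel)
  · simp
  · intro x y hx hy
    rw [lie_add, map_add, map_add, lie_add, hx, hy]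

/-- A homogeneous bracket-stable family spans an ideal which is `⊥` or `⊤`. -/
lemma gsn_ideal (comp : (Fin n → ℤ) → Submodule K L) (hint : DirectSum.IsInternal comp)
    (hgradedSimple : ∀ I : LieIdeal K L,
      ((I : Submodule K L) = ⨆ g : Fin n → ℤ, ((I : Submodule K L) ⊓ comp g)) →
        I = ⊥ ∨ I = ⊤)
    (π : (Fin n → ℤ) → L →ₗ[K] L)
    (h1 : ∀ a, ∀ x ∈ comp a, π a x = x) (h2 : ∀ a b, a ≠ b → ∀ x ∈ comp a, π b x = 0)
    (M : (Fin n → ℤ) → Submodule K L) (hM : ∀ a, M a ≤ comp a)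
    (hlie : ∀ a b, ∀ z ∈ comp b, ∀ y ∈ M a, ⁅z, y⁆ ∈ M (b + a)) :
    (∀ a, M a = ⊥) ∨ (∀ a, M a = comp a) := by
  let I : LieIdeal K L :=
    { (⨆ a, M a : Submodule K L) with
      lie_mem := by
        intro z y hy
        have hz : z ∈ ⨆ i, comp i := by rw [hint.submodule_iSup_eq_top]; trivial
        change ⁅z, y⁆ ∈ (⨆ a, M a : Submodule K L)
        refine Submodule.iSup_induction comp
          (motive := fun z => ⁅z, y⁆ ∈ (⨆ a, M a : Submodule K L)) hz ?_ ?_ ?_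
        · intro b z hz
          refine Submodule.iSup_induction M
            (motive := fun y => ⁅z, y⁆ ∈ (⨆ a, M a : Submodule K L)) hy ?_ ?_ ?_
          · intro a y hy
            exact Submodule.mem_iSup_of_mem _ (hlie a b z hz y hy)
          · simp
          · intro x y hx hy
            rw [lie_add]; exact add_mem hx hy
        · simp
        · intro x y hx hy
          rw [add_lie]; exact add_mem hx hy }
  have hI : (I : Submodule K L) = ⨆ a, M a := rfl
  have hMI : ∀ a, M a ≤ (I : Submodule K L) := fun a => hI ▸ le_iSup M a
  rcases hgradedSimple I (le_antisymm (by
      conv_lhs => rw [hI]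
      exact iSup_mono fun a => le_inf (hMI a) (hM a)) (iSup_le fun a => inf_le_left)) with h | h
  · left
    intro a
    rw [eq_bot_iff]
    have := hMI a
    rw [h] at this
    simpa using this
  · right
    intro a
    refine le_antisymm (hM a) fun x hx => ?_
    have hx2 : x ∈ ⨆ a, M a := by
      rw [← hI, h]; trivial
    have : π a x ∈ M a := by
      refine Submodule.iSup_induction M (motive := fun x => π a x ∈ M a) hx2 ?_ ?_ ?_
      · intro b y hy
        by_cases hb : b = a
        · subst hb; rw [h1 _ _ (hM _ hy)]; exact hy
        · rw [h2 b a hb _ (hM _ hy)]; exact zero_mem _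
      · simp
      · intro x y hx hy
        rw [map_add]; exact add_mem hx hy
    rwa [h1 a x hx] at this

lemma gsn_center (comp : (Fin n → ℤ) → Submodule K L) (hint : DirectSum.IsInternal comp)
    (hbr : ∀ a b : Fin n → ℤ, ∀ x ∈ comp a, ∀ y ∈ comp b, ⁅x, y⁆ ∈ comp (a + b))
    (hdim : 2 ≤ Module.rank K L)
    (hgradedSimple : ∀ I : LieIdeal K L,
      ((I : Submodule K L) = ⨆ g : Fin n → ℤ, ((I : Submodule K L) ⊓ comp g)) →
        I = ⊥ ∨ I = ⊤) (x : L) (hx : ∀ y : L, ⁅x, y⁆ = 0) : x = 0 := by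
  classical
  obtain ⟨π, h0, h1, h2, h3, h4⟩ := gsn_exists_proj comp hint
  have hx' : ∀ y, ⁅y, x⁆ = 0 := fun y => by rw [← lie_skew, hx, neg_zero]
  have hall : ∀ u : L, (∀ b, ∀ z ∈ comp b, ⁅z, u⁆ = 0) → ∀ z : L, ⁅z, u⁆ = 0 := by
    intro u hu z
    have hz : z ∈ ⨆ i, comp i := by rw [hint.submodule_iSup_eq_top]; trivial
    refine Submodule.iSup_induction comp (motive := fun z => ⁅z, u⁆ = 0) hz hu (by simp) ?_
    intro x y hx hy
    rw [add_lie, hx, hy, add_zero]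
  by_contra hne
  obtain ⟨g, hg⟩ : ∃ g, π g x ≠ 0 := by
    by_contra h
    push Not at h
    exact hne (by simpa using h4 x ⊥ (by simpa using h))
  have hc : ∀ z : L, ⁅z, π g x⁆ = 0 := by
    apply hall
    intro b z hz
    have := gsn_bracket_proj comp hint hbr π h1 h2 b z hz (g + b) x
    rw [hx', map_zero, add_sub_cancel_right] at this
    exact this.symm
  have key := gsn_ideal comp hint hgradedSimple π h1 h2
    (fun a => if a = g then Submodule.span K {π g x} else ⊥)
    (by
      intro a
      split_ifs with h
      · subst h
        rw [Submodule.span_le]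
        simpa using h0 a x
      · exact bot_le)
    (by
      intro a b z hz y hy
      have : ⁅z, y⁆ = 0 := by
        split_ifs at hy with h
        · obtain ⟨c, rfl⟩ := Submodule.mem_span_singleton.mp hy
          rw [lie_smul, hc, smul_zero]
        · rw [(Submodule.mem_bot K).mp hy, lie_zero]
      rw [this]
      exact zero_mem _)
  rcases key with h | h
  · have := h g
    rw [if_pos rfl, Submodule.span_singleton_eq_bot] at this
    exact hg this
  · have htop : Submodule.span K {π g x} = ⊤ := by
      rw [eq_top_iff, ← hint.submodule_iSup_eq_top]
      refine iSup_le fun a => ?_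
      rw [← h a]
      split_ifs
      · exact le_rfl
      · exact bot_le
    have hr : Module.rank K L ≤ 1 := by
      rw [← rank_top, ← htop]
      exact (rank_span_le _).trans (by simp)
    have := hdim.trans hr
    norm_num at this

lemma gsn_exists_seq (comp : (Fin n → ℤ) → Submodule K L) (hint : DirectSum.IsInternal comp)
    (hbr : ∀ a b : Fin n → ℤ, ∀ x ∈ comp a, ∀ y ∈ comp b, ⁅x, y⁆ ∈ comp (a + b))
    (hgradedSimple : ∀ I : LieIdeal K L,
      ((I : Submodule K L) = ⨆ g : Fin n → ℤ, ((I : Submodule K L) ⊓ comp g)) →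
        I = ⊥ ∨ I = ⊤)
    (I : LieIdeal K L) (hI : I ≠ ⊥) (hI2 : I ≠ ⊤) :
    ∃ u : ℕ → L, LinearIndependent K u ∧ ∀ p q, ⁅u p, u q⁆ = 0 := by
  classical
  obtain ⟨π, h0, h1, h2, h3, h4⟩ := gsn_exists_proj comp hint
  have hbp := gsn_bracket_proj comp hint hbr π h1 h2
  have hex : ∃ s : ℕ, ∃ x ∈ I, x ≠ 0 ∧ {a | π a x ≠ 0}.ncard = s := by
    obtain ⟨x, hx, hx0⟩ : ∃ x ∈ I, x ≠ 0 := by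
      by_contra hcon
      push Not at hcon
      exact hI ((LieSubmodule.eq_bot_iff I).mpr hcon)
    exact ⟨_, x, hx, hx0, rfl⟩
  obtain ⟨x, hxI, hx0, hxs⟩ := Nat.find_spec hex
  have hmin : ∀ y ∈ I, {a | π a y ≠ 0}.ncard < {a | π a x ≠ 0}.ncard → y = 0 := by
    intro y hy hlt
    by_contra hne
    rw [hxs] at hlt
    exact Nat.find_min hex hlt ⟨y, hy, hne, rfl⟩
  set S : Set (Fin n → ℤ) := {a | π a x ≠ 0} with hS
  obtain ⟨g, hg⟩ : ∃ g, g ∈ S := by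
    by_contra h
    push Not at h
    refine hx0 ?_
    have := h4 x ⊥ (fun a => by
      have := h a
      simp only [hS, Set.mem_ofPred_eq, not_not] at this
      simp [this])
    simpa using this
  -- minimality
  have hvan : ∀ y ∈ I, ∀ c, (∀ a, π a y ≠ 0 → a - c ∈ S) → ∀ g ∈ S, π (g + c) y = 0 → y = 0 := by
    intro y hy c hsup g hg hz
    apply hmin y hy
    have hsub : {a | π a y ≠ 0} ⊆ (fun a => a + c) '' (S \ {g}) := by
      intro a ha
      refine ⟨a - c, ⟨hsup a ha, ?_⟩, by simp⟩
      rintro rfl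
      apply ha
      simpa using hz
    have hfin : (S \ {g}).Finite := (h3 x).subset Set.sdiff_subset
    calc _ ≤ ((fun a => a + c) '' (S \ {g})).ncard := Set.ncard_le_ncard hsub (hfin.image _)
      _ ≤ (S \ {g}).ncard := Set.ncard_image_le hfin
      _ < S.ncard := Set.ncard_sdiff_singleton_lt_of_mem hg (h3 x)
  let M : (Fin n → ℤ) → Submodule K L := fun a =>
    { carrier := {u | ∃ y ∈ I, (∀ b, π b y ≠ 0 → b - (a - g) ∈ S) ∧ π a y = u}
      zero_mem' := ⟨0, zero_mem _, by simp, by simp⟩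
      add_mem' := by
        rintro _ _ ⟨y, hy, hy1, rfl⟩ ⟨z, hz, hz1, rfl⟩
        refine ⟨y + z, add_mem hy hz, ?_, map_add _ _ _⟩
        intro b hb
        by_cases h : π b y = 0
        · apply hz1
          intro h'
          apply hb
          rw [map_add, h, h', add_zero]
        · exact hy1 b h
      smul_mem' := by
        rintro c _ ⟨y, hy, hy1, rfl⟩
        refine ⟨c • y, I.smul_mem c hy, ?_, map_smul _ _ _⟩
        intro b hb
        apply hy1
        intro h
        apply hb
        rw [map_smul, h, smul_zero] }
  -- the shifted family is stable under brackets
  have hshift : ∀ a b, ∀ z ∈ comp b, ∀ y ∈ I, (∀ c, π c y ≠ 0 → c - (a - g) ∈ S) →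
      ∀ c, π c ⁅z, y⁆ ≠ 0 → c - (b + a - g) ∈ S := by
    intro a b z hz y hy hy1 c hc
    rw [hbp b z hz] at hc
    have : π (c - b) y ≠ 0 := by
      intro h
      rw [h, lie_zero] at hc
      exact hc rfl
    have := hy1 _ this
    convert this using 1
    abel
  have hMfull : ∀ a, M a = comp a := by
    rcases gsn_ideal comp hint hgradedSimple π h1 h2 M (by
        rintro a _ ⟨y, _, _, rfl⟩
        exact h0 a y) (by
        rintro a b z hz _ ⟨y, hy, hy1, rfl⟩
        refine ⟨⁅z, y⁆, lie_mem_right K L I z y hy, hshift a b z hz y hy hy1, ?_⟩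
        rw [hbp b z hz, add_sub_cancel_left]) with h | h
    · exfalso
      have hm : π g x ∈ M g := ⟨x, hxI, by
        intro b hb
        rw [sub_self, sub_zero]
        exact hb, rfl⟩
      rw [h g] at hm
      exact hg (by simpa using hm)
    · exact h
  obtain ⟨h, hh, hgh⟩ : ∃ h ∈ S, h ≠ g := by
    by_contra hcon
    push Not at hcon
    apply hI2
    rw [eq_top_iff]
    intro z _
    refine h4 z (I : Submodule K L) fun a => ?_
    have hz : π a z ∈ M a := by rw [hMfull]; exact h0 a z
    obtain ⟨y, hy, hy1, hyz⟩ := hz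
    have hyI : y ∈ (I : Submodule K L) := hy
    convert hyI using 1
    rw [← hyz]
    rw [← sub_eq_zero]
    have := h4 (π a y - y) ⊥ (fun b => by
      rw [Submodule.mem_bot, map_sub]
      by_cases hb : b = a
      · subst hb
        rw [h1 b _ (h0 b y), sub_self]
      · rw [h2 a b (Ne.symm hb) _ (h0 a y), zero_sub, neg_eq_zero]
        by_contra hne
        have := hcon _ (hy1 b hne)
        apply hb
        have h5 : b = (b - (a - g)) + (a - g) := by abel
        rw [h5, this]; abel)
    simpa using this
  -- the relation `v = θ u` for `u` homogeneous of degree `a`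
  let Rel : (Fin n → ℤ) → L → L → Prop := fun a u v =>
    ∃ y ∈ I, (∀ b, π b y ≠ 0 → b - (a - g) ∈ S) ∧ π a y = u ∧ π (h + (a - g)) y = v
  have hRex : ∀ a, ∀ u ∈ comp a, ∃ v, Rel a u v := by
    intro a u hu
    rw [← hMfull a] at hu
    obtain ⟨y, hy, hy1, hyu⟩ := hu
    exact ⟨_, y, hy, hy1, hyu, rfl⟩
  have hRmem : ∀ a u v, Rel a u v → v ∈ comp (a + (h - g)) := by
    rintro a u v ⟨y, hy, hy1, hyu, rfl⟩
    have := h0 (h + (a - g)) y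
    convert this using 2
    abel
  have hR0 : ∀ a v, Rel a 0 v → v = 0 := by
    rintro a v ⟨y, hy, hy1, hyu, rfl⟩
    rw [hvan y hy (a - g) hy1 g hg (by simpa using hyu), map_zero]
  have hR1 : ∀ a u, Rel a u 0 → u = 0 := by
    rintro a u ⟨y, hy, hy1, rfl, hyv⟩
    rw [hvan y hy (a - g) hy1 h hh hyv, map_zero]
  have hRlie : ∀ a b, ∀ z ∈ comp b, ∀ u v, Rel a u v → Rel (b + a) ⁅z, u⁆ ⁅z, v⁆ := by
    rintro a b z hz u v ⟨y, hy, hy1, rfl, rfl⟩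
    refine ⟨⁅z, y⁆, lie_mem_right K L I z y hy, hshift a b z hz y hy hy1, ?_, ?_⟩
    · rw [hbp b z hz, add_sub_cancel_left]
    · rw [hbp b z hz]
      congr 2
      abel_nf
  choose! F hF using hRex
  let δ := h - g
  have hδ : δ ≠ 0 := sub_ne_zero.mpr hgh
  let u : ℕ → L := fun p => Nat.rec (π g x) (fun q w => F (g + q • δ) w) p
  have hu0 : u 0 = π g x := rfl
  have hus : ∀ p, u (p + 1) = F (g + p • δ) (u p) := fun p => rfl
  have humem : ∀ p, u p ∈ comp (g + p • δ) := by
    intro p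
    induction p with
    | zero => rw [hu0, zero_smul, add_zero]; exact h0 g x
    | succ p ih =>
      have := hRmem _ _ _ (hF _ _ ih)
      rw [hus]
      convert this using 2
      rw [succ_nsmul, ← add_assoc]
  have hurel : ∀ p, Rel (g + p • δ) (u p) (u (p + 1)) := fun p => hF _ _ (humem p)
  have hune : ∀ p, u p ≠ 0 := by
    intro p
    induction p with
    | zero => exact hg
    | succ p ih =>
      intro h
      have := hurel p
      rw [h] at this
      exact ih (hR1 _ _ this)
  have hle : ∀ p r, ⁅u p, u (p + r)⁆ = 0 := by
    intro p r
    induction r with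
    | zero => simp
    | succ r ih =>
      have := hRlie _ _ (u p) (humem p) _ _ (hurel (p + r))
      rw [ih] at this
      exact hR0 _ _ this
  refine ⟨u, ?_, ?_⟩
  · have hinj : Function.Injective (fun p : ℕ => g + p • δ) := by
      intro p q hpq
      have h5 : p • δ = q • δ := add_left_cancel hpq
      obtain ⟨i, hi⟩ := Function.ne_iff.mp hδ
      have h6 := congrFun h5 i
      simp only [Pi.smul_apply, nsmul_eq_mul] at h6
      exact_mod_cast mul_right_cancel₀ hi h6
    exact (hint.submodule_iSupIndep.comp hinj).linearIndependent _ humem hune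
  · intro p q
    rcases le_total p q with hpq | hpq
    · obtain ⟨r, rfl⟩ := Nat.exists_eq_add_of_le hpq
      exact hle p r
    · obtain ⟨r, rfl⟩ := Nat.exists_eq_add_of_le hpq
      rw [← lie_skew, hle, neg_zero]
end graded

/-- Let `L` be a `ℤⁿ`-graded Lie algebra over a field of characteristic zero with
finite-dimensional homogeneous components, which is graded-simple (dimension at
least `2` and no nontrivial proper graded ideals) but not simple as a Lie
algebra.  Then `L` contains an infinite-dimensional abelian Lie subalgebra;
consequently `U(L)` is not left Noetherian. -/
theorem gradedSimple_not_simple_abelian_and_notNoetherian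
    (K : Type*) [Field K] [CharZero K]
    (L : Type*) [LieRing L] [LieAlgebra K L]
    (n : ℕ)
    (comp : (Fin n → ℤ) → Submodule K L)
    (hint : DirectSum.IsInternal comp)
    (hbr : ∀ a b : Fin n → ℤ, ∀ x ∈ comp a, ∀ y ∈ comp b, ⁅x, y⁆ ∈ comp (a + b))
    (hfd : ∀ g : Fin n → ℤ, FiniteDimensional K (comp g))
    (hdim : 2 ≤ Module.rank K L)
    (hgradedSimple : ∀ I : LieIdeal K L,
      ((I : Submodule K L) = ⨆ g : Fin n → ℤ, ((I : Submodule K L) ⊓ comp g)) →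
        I = ⊥ ∨ I = ⊤)
    (hnotSimple : ∃ I : LieIdeal K L, I ≠ ⊥ ∧ I ≠ ⊤) :
    (∃ A : LieSubalgebra K L, IsLieAbelian A ∧ ¬ FiniteDimensional K A) ∧
      ¬ IsNoetherianRing (UniversalEnvelopingAlgebra K L) := by
  obtain ⟨I, hI, hI2⟩ := hnotSimple
  obtain ⟨u, hli, hu⟩ := gsn_exists_seq comp hint hbr hgradedSimple I hI hI2
  constructor
  · have hspan : ∀ x ∈ Submodule.span K (Set.range u), ∀ y ∈ Submodule.span K (Set.range u),
        ⁅x, y⁆ = 0 := by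
      intro x hx y hy
      refine Submodule.span_induction ?_ (by simp) ?_ ?_ hx
      · rintro _ ⟨p, rfl⟩
        refine Submodule.span_induction ?_ (by simp) ?_ ?_ hy
        · rintro _ ⟨q, rfl⟩
          exact hu p q
        · intro a b _ _ ha hb
          rw [lie_add, ha, hb, add_zero]
        · intro c a _ ha
          rw [lie_smul, ha, smul_zero]
      · intro a b _ _ ha hb
        rw [add_lie, ha, hb, add_zero]
      · intro c a _ ha
        rw [smul_lie, ha, smul_zero]
    let A : LieSubalgebra K L :=
      { Submodule.span K (Set.range u) with
        lie_mem' := by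
          intro x y hx hy
          have h : ⁅x, y⁆ = 0 := hspan x hx y hy
          change ⁅x, y⁆ ∈ Submodule.span K (Set.range u)
          rw [h]
          exact zero_mem _ }
    refine ⟨A, ⟨fun x y => Subtype.ext (hspan x x.2 y y.2)⟩, ?_⟩
    intro hfin
    have hfin' : FiniteDimensional K (Submodule.span K (Set.range u)) := hfin
    have hli2 := linearIndependent_span hli
    have := hli2.finite
    exact not_finite ℕ
  · exact gsn_not_noetherian u hu
      (gsn_li_U u hli (gsn_center comp hint hbr hdim hgradedSimple))
end

section
/- Let G = G_{-1} ⊕ G_0 ⊕ G_1 be a local Lie algebra over a field K, i.e. G_0 is a Lie algebra, G_{±1} are G_0-modules, and there is a G_0-equivariant bilinear bracket G_{-1} × G_1 → G_0 satisfying the Jacobi identity whenever it makes sense. Then there exists a Z-graded Lie algebra L_max(G) whose underlying graded space is Free(G_{-1}) ⊕ G_0 ⊕ Free(G_1) (Free denoting the free Lie algebra, graded by extending the degrees ±1), whose local part L_{-1} ⊕ L_0 ⊕ L_1 is G, and whose bracket extends the given local bracket. -/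
/-- A local Lie algebra `G = Gneg ⊕ Gzero ⊕ G₁`: `Gzero` is a Lie algebra, `Gneg` and `Gpos`
are `Gzero`-modules, and there is a `Gzero`-equivariant bracket `Gneg × Gpos → Gzero`.
(These data encode exactly the brackets on pairs of degrees `(i,j)` with
`i, j, i+j ∈ {-1,0,1}`, and the equivariance is the Jacobi identity in the only
case not already covered by the Lie algebra and module axioms.) -/
structure LocalLieData (K Gneg Gzero Gpos : Type) [Field K]
    [LieRing Gzero] [LieAlgebra K Gzero]
    [AddCommGroup Gneg] [Module K Gneg] [LieRingModule Gzero Gneg] [LieModule K Gzero Gneg]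
    [AddCommGroup Gpos] [Module K Gpos] [LieRingModule Gzero Gpos] [LieModule K Gzero Gpos] where
  br : Gneg →ₗ[K] Gpos →ₗ[K] Gzero
  equivariant : ∀ (x : Gzero) (a : Gneg) (b : Gpos),
    ⁅x, br a b⁆ = br ⁅x, a⁆ b + br a ⁅x, b⁆

/-- A realization of the maximal `ℤ`-graded Lie algebra `L_max(G)` on the local
Lie algebra `G`: a `ℤ`-graded Lie algebra whose local part `L₋₁ ⊕ L₀ ⊕ L₁` is
`G` (with the bracket extending the given local bracket), and whose underlying
graded space is `Free(Gneg) ⊕ Gzero ⊕ Free(Gpos)`, i.e. the positive (resp. negative)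
part is the free Lie algebra on `Gpos` (resp. `Gneg`). -/
structure MaxGradedExtension (K Gneg Gzero Gpos : Type) [Field K]
    [LieRing Gzero] [LieAlgebra K Gzero]
    [AddCommGroup Gneg] [Module K Gneg] [LieRingModule Gzero Gneg] [LieModule K Gzero Gneg]
    [AddCommGroup Gpos] [Module K Gpos] [LieRingModule Gzero Gpos] [LieModule K Gzero Gpos]
    (D : LocalLieData K Gneg Gzero Gpos) where
  L : Type
  [lieRing : LieRing L]
  [lieAlgebra : LieAlgebra K L]
  comp : ℤ → Submodule K L
  isInternal : DirectSum.IsInternal comp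
  graded_bracket : ∀ n m : ℤ, ∀ x ∈ comp n, ∀ y ∈ comp m, ⁅x, y⁆ ∈ comp (n + m)
  /-- The local part of `L` is identified with `G`. -/
  eneg : Gneg ≃ₗ[K] comp (-1)
  ezero : Gzero ≃ₗ[K] comp 0
  epos : Gpos ≃ₗ[K] comp 1
  zero_bracket : ∀ x y : Gzero, ((ezero ⁅x, y⁆ : comp 0) : L) = ⁅((ezero x : comp 0) : L), ((ezero y : comp 0) : L)⁆
  act_neg : ∀ (x : Gzero) (a : Gneg), ((eneg ⁅x, a⁆ : comp (-1)) : L) = ⁅((ezero x : comp 0) : L), ((eneg a : comp (-1)) : L)⁆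
  act_pos : ∀ (x : Gzero) (b : Gpos), ((epos ⁅x, b⁆ : comp 1) : L) = ⁅((ezero x : comp 0) : L), ((epos b : comp 1) : L)⁆
  br_compat : ∀ (a : Gneg) (b : Gpos), ((ezero (D.br a b) : comp 0) : L) = ⁅((eneg a : comp (-1)) : L), ((epos b : comp 1) : L)⁆
  /-- The positive part is generated by the degree-one component … -/
  pos_gen : ∀ n : ℤ, 1 ≤ n → ∀ x ∈ comp n,
    x ∈ LieSubalgebra.lieSpan K L ((comp 1 : Submodule K L) : Set L)
  /-- … on which it is free: `⊕_{n ≥ 1} Lₙ = Free(Gpos)`. -/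
  pos_free : ∀ (A : Type) [LieRing A] [LieAlgebra K A] (φ : Gpos →ₗ[K] A),
    ∃! g : (LieSubalgebra.lieSpan K L ((comp 1 : Submodule K L) : Set L)) →ₗ⁅K⁆ A,
      ∀ b : Gpos, g ⟨((epos b : comp 1) : L),
        LieSubalgebra.subset_lieSpan (epos b).2⟩ = φ b
  /-- The negative part is generated by the degree-minus-one component … -/
  neg_gen : ∀ n : ℤ, n ≤ -1 → ∀ x ∈ comp n,
    x ∈ LieSubalgebra.lieSpan K L ((comp (-1) : Submodule K L) : Set L)
  /-- … on which it is free: `⊕_{n ≤ -1} Lₙ = Free(Gneg)`. -/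
  neg_free : ∀ (A : Type) [LieRing A] [LieAlgebra K A] (φ : Gneg →ₗ[K] A),
    ∃! g : (LieSubalgebra.lieSpan K L ((comp (-1) : Submodule K L) : Set L)) →ₗ⁅K⁆ A,
      ∀ a : Gneg, g ⟨((eneg a : comp (-1)) : L),
        LieSubalgebra.subset_lieSpan (eneg a).2⟩ = φ a

noncomputable section LocalLieConstruction

namespace LocalLie

attribute [local instance] LieRing.ofAssociativeRing LieAlgebra.ofAssociativeAlgebra

/-! ### The free Lie algebra on a vector space -/

/-- The free Lie algebra on a vector space `M`. -/
def FL (K M : Type) [Field K] [AddCommGroup M] [Module K M] : Type :=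
  FreeLieAlgebra K (Module.Basis.ofVectorSpaceIndex K M)

section FL

variable {K M : Type} [Field K] [AddCommGroup M] [Module K M]

instance : LieRing (FL K M) :=
  inferInstanceAs (LieRing (FreeLieAlgebra K (Module.Basis.ofVectorSpaceIndex K M)))

instance : LieAlgebra K (FL K M) :=
  inferInstanceAs (LieAlgebra K (FreeLieAlgebra K (Module.Basis.ofVectorSpaceIndex K M)))

/-- The inclusion of generators. -/
def FL.ι : M →ₗ[K] FL K M :=
  (Module.Basis.ofVectorSpace K M).constr (M' := FL K M) K
    (fun i => (FreeLieAlgebra.of K i : FreeLieAlgebra K (Module.Basis.ofVectorSpaceIndex K M)))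

theorem FL.ι_basis (i : Module.Basis.ofVectorSpaceIndex K M) :
    FL.ι (Module.Basis.ofVectorSpace K M i) = (FreeLieAlgebra.of K i : FreeLieAlgebra K _) :=
  (Module.Basis.ofVectorSpace K M).constr_basis (M' := FL K M) K _ i

/-- The universal property. -/
def FL.lift {A : Type} [LieRing A] [LieAlgebra K A] (f : M →ₗ[K] A) : FL K M →ₗ⁅K⁆ A :=
  FreeLieAlgebra.lift K (fun i => f (Module.Basis.ofVectorSpace K M i))

theorem FL.lift_ι {A : Type} [LieRing A] [LieAlgebra K A] (f : M →ₗ[K] A) (m : M) :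
    FL.lift f (FL.ι m) = f m := by
  have : (FL.lift f : FL K M →ₗ[K] A) ∘ₗ FL.ι = f := by
    refine (Module.Basis.ofVectorSpace K M).ext fun i => ?_
    rw [LinearMap.comp_apply, FL.ι_basis]
    exact FreeLieAlgebra.lift_of_apply _ i
  exact LinearMap.congr_fun this m

theorem FL.hom_ext {A : Type} [LieRing A] [LieAlgebra K A] {f g : FL K M →ₗ⁅K⁆ A}
    (h : ∀ m, f (FL.ι m) = g (FL.ι m)) : f = g := by
  refine FreeLieAlgebra.hom_ext fun i => ?_
  have := h (Module.Basis.ofVectorSpace K M i)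
  rwa [FL.ι_basis] at this

theorem FL.mem_of_subalgebra (S : LieSubalgebra K (FL K M)) (h : ∀ m, FL.ι m ∈ S)
    (x : FL K M) : x ∈ S := by
  let f : M →ₗ[K] S :=
    { toFun := fun m => ⟨FL.ι m, h m⟩
      map_add' := fun a b => by ext; simp
      map_smul' := fun a b => by ext; simp }
  have : S.incl.comp (FL.lift f) = LieHom.id := by
    refine FL.hom_ext fun m => ?_
    simp [FL.lift_ι, f]
  have h2 := LieHom.congr_fun this x
  simp only [LieHom.comp_apply, LieHom.id_apply] at h2
  rw [← h2]
  exact (FL.lift f x).2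

theorem FL.induction {P : FL K M → Prop} (hι : ∀ m, P (FL.ι m)) (h0 : P 0)
    (hadd : ∀ x y, P x → P y → P (x + y)) (hsmul : ∀ (c : K) x, P x → P (c • x))
    (hlie : ∀ x y, P x → P y → P ⁅x, y⁆) (x : FL K M) : P x :=
  FL.mem_of_subalgebra
    { carrier := {x | P x}
      add_mem' := fun {a b} ha hb => hadd a b ha hb
      zero_mem' := h0
      smul_mem' := fun c a ha => hsmul c a ha
      lie_mem' := fun {a b} ha hb => hlie a b ha hb } hι x

/-- Derivations out of a free Lie algebra. -/
theorem FL.exists_der {W : Type} [AddCommGroup W] [Module K W]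
    (Φ : FL K M →ₗ⁅K⁆ Module.End K W) (f : M →ₗ[K] W) :
    ∃ d : FL K M →ₗ[K] W, (∀ m, d (FL.ι m) = f m) ∧
      ∀ x y, d ⁅x, y⁆ = Φ x (d y) - Φ y (d x) := by
  let e : M →ₗ[K] Module.End K (W × K) :=
    { toFun := fun m => LinearMap.inl K W K ∘ₗ
        ((Φ (FL.ι m)) ∘ₗ LinearMap.fst K W K + (LinearMap.snd K W K).smulRight (f m))
      map_add' := fun a b => by
        ext <;> simp
      map_smul' := fun a b => by
        ext <;> simp }
  let Λ := FL.lift e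
  let d : FL K M →ₗ[K] W :=
    { toFun := fun x => (Λ x (0, 1)).1
      map_add' := fun a b => by simp
      map_smul' := fun a b => by simp }
  have key : ∀ x (w : W) (c : K), Λ x (w, c) = (Φ x w + c • d x, 0) := by
    intro x
    refine FL.induction (P := fun x => ∀ (w : W) (c : K), Λ x (w, c) = (Φ x w + c • d x, 0))
      ?_ ?_ ?_ ?_ ?_ x
    · intro m w c
      simp [d, Λ, FL.lift_ι, e]
    · intro w c; simp [Prod.zero_eq_mk]
    · intro x y hx hy w c
      simp only [map_add, LinearMap.add_apply, hx, hy, Prod.mk_add_mk, smul_add]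
      congr 1
      · abel
      · simp
    · intro t x hx w c
      simp only [map_smul, LinearMap.smul_apply, hx, Prod.smul_mk, smul_add, smul_comm t c, smul_zero]
    · intro x y hx hy w c
      have : d ⁅x, y⁆ = Φ x (d y) - Φ y (d x) := by
        change (Λ ⁅x, y⁆ (0, 1)).1 = _
        simp [LieHom.map_lie, Ring.lie_def, hx, hy]
      rw [this]
      simp only [LieHom.map_lie, Ring.lie_def, LinearMap.sub_apply, Module.End.mul_apply, hx, hy,
        map_add, map_smul, zero_smul, add_zero, smul_sub, Prod.mk_sub_mk, sub_zero]
      congr 1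
      abel
  refine ⟨d, fun m => ?_, fun x y => ?_⟩
  · simp [d, Λ, FL.lift_ι, e]
  · change (Λ ⁅x, y⁆ (0, 1)).1 = _
    simp [LieHom.map_lie, Ring.lie_def, key]

theorem FL.lin_ext {W : Type} [AddCommGroup W] [Module K W]
    (Φ : FL K M →ₗ⁅K⁆ Module.End K W) {d d' : FL K M →ₗ[K] W}
    (h : ∀ x y, d ⁅x, y⁆ = Φ x (d y) - Φ y (d x))
    (h' : ∀ x y, d' ⁅x, y⁆ = Φ x (d' y) - Φ y (d' x))
    (hι : ∀ m, d (FL.ι m) = d' (FL.ι m)) : d = d' := by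
  ext x
  refine FL.induction (P := fun x => d x = d' x) hι (by simp) ?_ ?_ ?_ x
  · intro x y hx hy; simp [hx, hy]
  · intro c x hx; simp [hx]
  · intro x y hx hy; rw [h, h', hx, hy]

/-- The derivation extending a linear map. -/
def FL.der {W : Type} [AddCommGroup W] [Module K W]
    (Φ : FL K M →ₗ⁅K⁆ Module.End K W) : (M →ₗ[K] W) →ₗ[K] (FL K M →ₗ[K] W) where
  toFun f := (FL.exists_der Φ f).choose
  map_add' f g := by
    have h := (FL.exists_der Φ f).choose_spec
    have h1 := (FL.exists_der Φ g).choose_spec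
    have h2 := (FL.exists_der Φ (f + g)).choose_spec
    refine FL.lin_ext Φ h2.2 ?_ ?_
    · intro x y
      simp only [LinearMap.add_apply, h.2, h1.2, map_add]; abel
    · intro m
      simp only [LinearMap.add_apply, h.1, h1.1, h2.1]
  map_smul' c f := by
    have h := (FL.exists_der Φ f).choose_spec
    have h2 := (FL.exists_der Φ (c • f)).choose_spec
    refine FL.lin_ext Φ h2.2 ?_ ?_
    · intro x y
      simp only [LinearMap.smul_apply, h.2, map_smul, smul_sub, RingHom.id_apply]
    · intro m
      simp only [LinearMap.smul_apply, h.1, h2.1, RingHom.id_apply]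

theorem FL.der_ι {W : Type} [AddCommGroup W] [Module K W]
    (Φ : FL K M →ₗ⁅K⁆ Module.End K W) (f : M →ₗ[K] W) (m : M) :
    FL.der Φ f (FL.ι m) = f m := (FL.exists_der Φ f).choose_spec.1 m

theorem FL.der_lie {W : Type} [AddCommGroup W] [Module K W]
    (Φ : FL K M →ₗ⁅K⁆ Module.End K W) (f : M →ₗ[K] W) (x y : FL K M) :
    FL.der Φ f ⁅x, y⁆ = Φ x (FL.der Φ f y) - Φ y (FL.der Φ f x) :=
  (FL.exists_der Φ f).choose_spec.2 x y

/-! ### The grading of the free Lie algebra -/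

/-- Homogeneous elements. -/
inductive FL.Hom : ℤ → FL K M → Prop
  | ι (m : M) : FL.Hom 1 (FL.ι m)
  | zero (n : ℤ) : FL.Hom n 0
  | add {n : ℤ} {x y : FL K M} : FL.Hom n x → FL.Hom n y → FL.Hom n (x + y)
  | smul {n : ℤ} (c : K) {x : FL K M} : FL.Hom n x → FL.Hom n (c • x)
  | lie {n p : ℤ} {x y : FL K M} : FL.Hom n x → FL.Hom p y → FL.Hom (n + p) ⁅x, y⁆

/-- The homogeneous components. -/
def FL.gr (K M : Type) [Field K] [AddCommGroup M] [Module K M] (n : ℤ) :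
    Submodule K (FL K M) where
  carrier := {x | FL.Hom n x}
  add_mem' := FL.Hom.add
  zero_mem' := FL.Hom.zero n
  smul_mem' c _ h := FL.Hom.smul c h

theorem FL.lie_mem_gr {n p q : ℤ} {x y : FL K M} (hx : x ∈ FL.gr K M n) (hy : y ∈ FL.gr K M p)
    (h : n + p = q) : ⁅x, y⁆ ∈ FL.gr K M q := by
  subst h; exact FL.Hom.lie hx hy

theorem FL.ι_mem_gr {n : ℤ} (h : n = 1) (m : M) : FL.ι m ∈ FL.gr K M n := by
  subst h; exact FL.Hom.ι m

theorem FL.Hom.low {n : ℤ} {x : FL K M} (h : FL.Hom n x) :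
    (n ≤ 0 → x = 0) ∧ (n = 1 → ∃ m, FL.ι m = x) := by
  induction h with
  | ι m => exact ⟨fun h => by omega, fun _ => ⟨m, rfl⟩⟩
  | zero n => exact ⟨fun _ => rfl, fun _ => ⟨0, by simp⟩⟩
  | add _ _ h1 h2 =>
    refine ⟨fun h => by simp [h1.1 h, h2.1 h], fun h => ?_⟩
    obtain ⟨a, ha⟩ := h1.2 h
    obtain ⟨b, hb⟩ := h2.2 h
    exact ⟨a + b, by simp [ha, hb]⟩
  | smul c _ h1 =>
    refine ⟨fun h => by simp [h1.1 h], fun h => ?_⟩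
    obtain ⟨a, ha⟩ := h1.2 h
    exact ⟨c • a, by simp [ha]⟩
  | @lie n p x y _ _ h1 h2 =>
    have key : n + p ≤ 1 → ⁅x, y⁆ = 0 := by
      intro h
      rcases le_or_gt n 0 with h' | h'
      · simp [h1.1 h']
      · simp [h2.1 (by omega)]
    exact ⟨fun h => key (by omega), fun h => ⟨0, by simp [key h.le]⟩⟩

theorem FL.iSup_gr : ⨆ n, FL.gr K M n = ⊤ := by
  rw [eq_top_iff]
  intro x _
  refine FL.induction (P := fun x => x ∈ ⨆ n, FL.gr K M n) ?_ ?_ ?_ ?_ ?_ x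
  · intro m
    exact Submodule.mem_iSup_of_mem 1 (FL.Hom.ι m)
  · exact zero_mem _
  · intro x y hx hy; exact add_mem hx hy
  · intro c x hx; exact Submodule.smul_mem _ c hx
  · intro x y hx hy
    refine Submodule.iSup_induction (motive := fun x => ⁅x, y⁆ ∈ ⨆ n, FL.gr K M n) _ hx ?_ ?_ ?_
    · intro n x hx
      refine Submodule.iSup_induction (motive := fun y => ⁅x, y⁆ ∈ ⨆ n, FL.gr K M n) _ hy ?_ ?_ ?_
      · intro p y hy
        exact Submodule.mem_iSup_of_mem (n + p) (FL.Hom.lie hx hy)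
      · simp
      · intro a b ha hb; rw [lie_add]; exact add_mem ha hb
    · simp
    · intro a b ha hb; rw [add_lie]; exact add_mem ha hb

open scoped TensorProduct in
/-- The map into the loop algebra which records degrees. -/
def FL.loop (K M : Type) [Field K] [AddCommGroup M] [Module K M] :
    FL K M →ₗ⁅K⁆ LieAlgebra.loopAlgebra K ℤ (FL K M) :=
  FL.lift ((TensorProduct.mk K (AddMonoidAlgebra K ℤ) (FL K M) (AddMonoidAlgebra.single 1 1)) ∘ₗ
    FL.ι)

open scoped TensorProduct in
theorem FL.Hom.loop_eq {n : ℤ} {x : FL K M} (h : FL.Hom n x) :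
    FL.loop K M x = (AddMonoidAlgebra.single n 1 : AddMonoidAlgebra K ℤ) ⊗ₜ[K] x := by
  induction h with
  | ι m => rw [FL.loop, FL.lift_ι]; rfl
  | zero n => simp
  | add _ _ h1 h2 => rw [map_add, h1, h2, TensorProduct.tmul_add]
  | smul c _ h1 => rw [map_smul, h1, TensorProduct.tmul_smul]
  | lie _ _ h1 h2 =>
    rw [LieHom.map_lie, h1, h2, LieAlgebra.ExtendScalars.bracket_tmul,
      AddMonoidAlgebra.single_mul_single, one_mul]

/-- Projection to the homogeneous component. -/
def FL.proj (K M : Type) [Field K] [AddCommGroup M] [Module K M] (n : ℤ) :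
    FL K M →ₗ[K] FL K M :=
  Finsupp.lapply n ∘ₗ (LieAlgebra.LoopAlgebra.toFinsupp K ℤ (FL K M)).toLinearMap ∘ₗ
    (FL.loop K M : FL K M →ₗ[K] LieAlgebra.loopAlgebra K ℤ (FL K M))

theorem FL.proj_of_mem {n p : ℤ} {x : FL K M} (h : x ∈ FL.gr K M n) :
    FL.proj K M p x = if n = p then x else 0 := by
  have h' : FL.Hom n x := h
  simp only [FL.proj, LinearMap.comp_apply, LieHom.coe_toLinearMap, h'.loop_eq,
    LinearEquiv.coe_coe, LieAlgebra.LoopAlgebra.toFinsupp_single_tmul, Finsupp.lapply_apply,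
    Finsupp.single_apply]

theorem FL.ι_injective : Function.Injective (FL.ι : M → FL K M) := by
  -- use the abelian Lie algebra structure on `M`
  let _ : LieRing M :=
    { bracket := fun _ _ => 0
      add_lie := fun _ _ _ => (add_zero 0).symm
      lie_add := fun _ _ _ => (add_zero 0).symm
      lie_self := fun _ => rfl
      leibniz_lie := fun _ _ _ => (add_zero 0).symm }
  let _ : LieAlgebra K M := { lie_smul := fun _ _ _ => (smul_zero _).symm }
  intro a b h
  have := congrArg (FL.lift (LinearMap.id : M →ₗ[K] M)) h
  rwa [FL.lift_ι, FL.lift_ι] at this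

theorem FL.exists_unique_of_injective {L : Type} [LieRing L] [LieAlgebra K L]
    (j : FL K M →ₗ⁅K⁆ L) (hj : Function.Injective j) (s : Set L)
    (hs : s = Set.range fun m => j (FL.ι m)) :
    (∀ x, j x ∈ LieSubalgebra.lieSpan K L s) ∧
    ∀ (A : Type) [LieRing A] [LieAlgebra K A] (φ : M →ₗ[K] A),
    ∃! g : (LieSubalgebra.lieSpan K L s) →ₗ⁅K⁆ A,
      ∀ (m : M) (h : j (FL.ι m) ∈ LieSubalgebra.lieSpan K L s), g ⟨j (FL.ι m), h⟩ = φ m := by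
  have hmem : ∀ x, j x ∈ LieSubalgebra.lieSpan K L s := fun x =>
    FL.mem_of_subalgebra ((LieSubalgebra.lieSpan K L s).comap j)
      (fun m => LieSubalgebra.subset_lieSpan (by rw [hs]; exact ⟨m, rfl⟩)) x
  have hle : LieSubalgebra.lieSpan K L s ≤ j.range := by
    rw [LieSubalgebra.lieSpan_le, hs]
    rintro _ ⟨m, rfl⟩
    exact ⟨FL.ι m, rfl⟩
  refine ⟨hmem, fun A _ _ φ => ?_⟩
  let J : FL K M →ₗ⁅K⁆ LieSubalgebra.lieSpan K L s :=
    { toFun := fun x => ⟨j x, hmem x⟩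
      map_add' := fun a b => by ext; simp
      map_smul' := fun a b => by ext; simp
      map_lie' := fun {a b} => by ext; simp }
  have hJ : Function.Bijective J := by
    constructor
    · intro a b h
      exact hj (congrArg Subtype.val h)
    · rintro ⟨x, hx⟩
      obtain ⟨y, hy⟩ := hle hx
      exact ⟨y, Subtype.ext hy⟩
  let e : FL K M ≃ₗ⁅K⁆ LieSubalgebra.lieSpan K L s := LieEquiv.ofBijective J hJ
  have he : ∀ x, e x = ⟨j x, hmem x⟩ := fun x => rfl
  refine ⟨(FL.lift φ).comp (e.symm : _ →ₗ⁅K⁆ FL K M), ?_, ?_⟩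
  · intro m h
    have : e.symm ⟨j (FL.ι m), h⟩ = FL.ι m := by
      exact e.symm_apply_apply (FL.ι m)
    simp [this, FL.lift_ι]
  · intro g hg
    have : g.comp J = FL.lift φ := by
      refine FL.hom_ext fun m => ?_
      rw [FL.lift_ι]
      exact hg m _
    ext x
    obtain ⟨y, rfl⟩ := hJ.2 x
    have h1 : e.symm (J y) = y := e.symm_apply_apply y
    have h2 := LieHom.congr_fun this y
    simp only [LieHom.comp_apply] at h2
    simp [h1, h2]

end FL

/-! ### The action of the degree zero part -/

section Act

variable {K G M : Type} [Field K] [LieRing G] [LieAlgebra K G]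
  [AddCommGroup M] [Module K M] [LieRingModule G M] [LieModule K G M]

variable (K M) in
/-- The action of `G` on the free Lie algebra by derivations. -/
def act : G →ₗ[K] FL K M →ₗ[K] FL K M :=
  FL.der (LieAlgebra.ad K (FL K M)) ∘ₗ
    (LinearMap.llcomp K M M (FL K M) FL.ι) ∘ₗ (LieModule.toEnd K G M : G →ₗ[K] M →ₗ[K] M)

theorem act_ι (g : G) (m : M) : act K M g (FL.ι m) = FL.ι ⁅g, m⁆ := by
  rw [act, LinearMap.comp_apply, FL.der_ι]; rfl

theorem act_lie (g : G) (x y : FL K M) :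
    act K M g ⁅x, y⁆ = ⁅act K M g x, y⁆ + ⁅x, act K M g y⁆ := by
  rw [act, LinearMap.comp_apply, FL.der_lie]
  simp only [LieAlgebra.ad_apply]
  rw [← lie_skew y]; abel

theorem act_bracket (g h : G) (x : FL K M) :
    act K M ⁅g, h⁆ x = act K M g (act K M h x) - act K M h (act K M g x) := by
  refine FL.induction (P := fun x => act K M ⁅g, h⁆ x =
    act K M g (act K M h x) - act K M h (act K M g x)) ?_ ?_ ?_ ?_ ?_ x
  · intro m; simp only [act_ι, lie_lie, map_sub]
  · simp
  · intro x y hx hy; simp only [map_add, hx, hy]; abel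
  · intro c x hx; simp only [map_smul, hx, smul_sub]
  · intro x y hx hy
    simp only [act_lie, map_add, hx, hy, sub_lie, lie_sub]; abel

theorem act_mem_gr (g : G) {n : ℤ} {x : FL K M} (h : x ∈ FL.gr K M n) :
    act K M g x ∈ FL.gr K M n := by
  change FL.Hom n x at h
  induction h with
  | ι m => rw [act_ι]; exact FL.Hom.ι _
  | zero n => simp
  | add _ _ h1 h2 => rw [map_add]; exact add_mem h1 h2
  | smul c _ h1 => rw [map_smul]; exact Submodule.smul_mem _ _ h1
  | lie a b h1 h2 =>
    rw [act_lie]; exact add_mem (FL.Hom.lie h1 b) (FL.Hom.lie a h2)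

/-- The nonneg part as a module over the free Lie algebra. -/
def Bmod (K G M : Type) [Field K] [LieRing G] [LieAlgebra K G]
    [AddCommGroup M] [Module K M] [LieRingModule G M] [LieModule K G M] :
    FL K M →ₗ⁅K⁆ Module.End K (G × FL K M) where
  toFun x := LinearMap.inr K G (FL K M) ∘ₗ
    (LieAlgebra.ad K (FL K M) x ∘ₗ LinearMap.snd K G (FL K M)
      - (act K M).flip x ∘ₗ LinearMap.fst K G (FL K M))
  map_add' x y := by
    refine LinearMap.ext fun w => ?_
    simp
    abel
  map_smul' c x := by
    refine LinearMap.ext fun w => ?_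
    simp [smul_sub]
  map_lie' {x y} := by
    refine LinearMap.ext fun w => ?_
    simp [Ring.lie_def, act_lie]
    rw [← lie_skew x (act K M w.1 y), ← lie_skew y (act K M w.1 x)]
    abel

theorem Bmod_apply (x : FL K M) (g : G) (z : FL K M) :
    Bmod K G M x (g, z) = (0, ⁅x, z⁆ - act K M g x) := by
  simp [Bmod]

end Act

/-- The action of one side on the other: the derivations `δ a` for `a` in `M`. -/
theorem exists_delta {K G M N : Type} [Field K] [LieRing G] [LieAlgebra K G]
    [AddCommGroup M] [Module K M]
    [AddCommGroup N] [Module K N] [LieRingModule G N] [LieModule K G N]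
    (β : M →ₗ[K] N →ₗ[K] G) :
    ∃ (d0 : M →ₗ[K] FL K N →ₗ[K] G) (d1 : M →ₗ[K] FL K N →ₗ[K] FL K N),
      (∀ a b, d0 a (FL.ι b) = β a b) ∧ (∀ a b, d1 a (FL.ι b) = 0) ∧
      (∀ a (x y : FL K N), d0 a ⁅x, y⁆ = 0) ∧
      ∀ a (x y : FL K N), d1 a ⁅x, y⁆ = ⁅x, d1 a y⁆ - act K N (d0 a y) x
        - (⁅y, d1 a x⁆ - act K N (d0 a x) y) := by
  let d : M →ₗ[K] FL K N →ₗ[K] (G × FL K N) :=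
    FL.der (Bmod K G N) ∘ₗ (LinearMap.llcomp K N G (G × FL K N) (LinearMap.inl K _ _)) ∘ₗ β
  have h1 : ∀ a b, d a (FL.ι b) = (β a b, 0) := by
    intro a b
    simp only [d, LinearMap.comp_apply]
    rw [FL.der_ι]; rfl
  have h2 : ∀ a (x y : FL K N), d a ⁅x, y⁆ = (0, ⁅x, (d a y).2⁆ - act K N (d a y).1 x
        - (⁅y, (d a x).2⁆ - act K N (d a x).1 y)) := by
    intro a x y
    have := FL.der_lie (Bmod K G N)
      ((LinearMap.llcomp K N G (G × FL K N) (LinearMap.inl K _ _)) (β a)) x y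
    change d a ⁅x, y⁆ = Bmod K G N x (d a y) - Bmod K G N y (d a x) at this
    have hB : ∀ x (w : G × FL K N), Bmod K G N x w = (0, ⁅x, w.2⁆ - act K N w.1 x) :=
      fun x w => Bmod_apply x w.1 w.2
    rw [hB, hB] at this
    rw [this, Prod.mk_sub_mk, sub_zero]
  refine ⟨(LinearMap.llcomp K (FL K N) (G × FL K N) G (LinearMap.fst K _ _)) ∘ₗ d,
    (LinearMap.llcomp K (FL K N) (G × FL K N) (FL K N) (LinearMap.snd K _ _)) ∘ₗ d,
    ?_, ?_, ?_, ?_⟩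
  · intro a b; simp [h1]
  · intro a b; simp [h1]
  · intro a x y; simp [h2]
  · intro a x y; simp [h2]

/-! ### The bracket -/

/-- The data from which the bracket is built, in a form which is symmetric
under exchanging the two sides. -/
structure Pre (K G M N V : Type) [Field K] [LieRing G] [LieAlgebra K G]
    [AddCommGroup M] [Module K M] [LieRingModule G M] [LieModule K G M]
    [AddCommGroup N] [Module K N] [LieRingModule G N] [LieModule K G N]
    [AddCommGroup V] [Module K V] where
  β : M →ₗ[K] N →ₗ[K] G
  hβ : ∀ (x : G) (a : M) (b : N), ⁅x, β a b⁆ = β ⁅x, a⁆ b + β a ⁅x, b⁆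
  j1 : FL K M →ₗ[K] V
  j0 : G →ₗ[K] V
  j2 : FL K N →ₗ[K] V
  span : ∀ v, ∃ y g z, v = j1 y + j0 g + j2 z
  E1 : M →ₗ[K] Module.End K V
  E0 : G →ₗ[K] Module.End K V
  E2 : N →ₗ[K] Module.End K V
  ρ : V →ₗ[K] Module.End K V
  ρ1 : ∀ y : FL K M, ρ (j1 y) = FL.lift E1 y
  ρ0 : ∀ g : G, ρ (j0 g) = E0 g
  ρ2 : ∀ z : FL K N, ρ (j2 z) = FL.lift E2 z
  E01 : ∀ (g : G) (y : FL K M), E0 g (j1 y) = j1 (act K M g y)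
  E00 : ∀ (g h : G), E0 g (j0 h) = j0 ⁅g, h⁆
  E02 : ∀ (g : G) (z : FL K N), E0 g (j2 z) = j2 (act K N g z)
  E11 : ∀ (a : M) (y : FL K M), E1 a (j1 y) = j1 ⁅FL.ι (K := K) a, y⁆
  E10 : ∀ (a : M) (g : G), E1 a (j0 g) = - j1 (FL.ι (K := K) ⁅g, a⁆)
  d0 : M →ₗ[K] FL K N →ₗ[K] G
  d1 : M →ₗ[K] FL K N →ₗ[K] FL K N
  E12 : ∀ (a : M) (z : FL K N), E1 a (j2 z) = j0 (d0 a z) + j2 (d1 a z)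
  d0ι : ∀ (a : M) (b : N), d0 a (FL.ι (K := K) b) = β a b
  d1ι : ∀ (a : M) (b : N), d1 a (FL.ι (K := K) b) = 0
  d0l : ∀ (a : M) (x y : FL K N), d0 a ⁅x, y⁆ = 0
  d1l : ∀ (a : M) (x y : FL K N), d1 a ⁅x, y⁆ = ⁅x, d1 a y⁆ - act K N (d0 a y) x
        - (⁅y, d1 a x⁆ - act K N (d0 a x) y)
  E22 : ∀ (b : N) (z : FL K N), E2 b (j2 z) = j2 ⁅FL.ι (K := K) b, z⁆
  E20 : ∀ (b : N) (g : G), E2 b (j0 g) = - j2 (FL.ι (K := K) ⁅g, b⁆)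
  d0' : N →ₗ[K] FL K M →ₗ[K] G
  d1' : N →ₗ[K] FL K M →ₗ[K] FL K M
  E21 : ∀ (b : N) (y : FL K M), E2 b (j1 y) = j0 (d0' b y) + j1 (d1' b y)
  d0ι' : ∀ (b : N) (a : M), d0' b (FL.ι (K := K) a) = - β a b
  d1ι' : ∀ (b : N) (a : M), d1' b (FL.ι (K := K) a) = 0
  d0l' : ∀ (b : N) (x y : FL K M), d0' b ⁅x, y⁆ = 0
  d1l' : ∀ (b : N) (x y : FL K M), d1' b ⁅x, y⁆ = ⁅x, d1' b y⁆ - act K M (d0' b y) x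
        - (⁅y, d1' b x⁆ - act K M (d0' b x) y)

namespace Pre

variable {K G M N V : Type} [Field K] [LieRing G] [LieAlgebra K G]
    [AddCommGroup M] [Module K M] [LieRingModule G M] [LieModule K G M]
    [AddCommGroup N] [Module K N] [LieRingModule G N] [LieModule K G N]
    [AddCommGroup V] [Module K V] (P : Pre K G M N V)

/-- Exchanging the two sides. -/
def swap : Pre K G N M V where
  β := - P.β.flip
  hβ x b a := by simp [P.hβ, add_comm]
  j1 := P.j2
  j0 := P.j0
  j2 := P.j1
  span v := by
    obtain ⟨y, g, z, h⟩ := P.span v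
    exact ⟨z, g, y, by rw [h]; abel⟩
  E1 := P.E2
  E0 := P.E0
  E2 := P.E1
  ρ := P.ρ
  ρ1 := P.ρ2
  ρ0 := P.ρ0
  ρ2 := P.ρ1
  E01 := P.E02
  E00 := P.E00
  E02 := P.E01
  E11 := P.E22
  E10 := P.E20
  d0 := P.d0'
  d1 := P.d1'
  E12 := P.E21
  d0ι := by simp [P.d0ι']
  d1ι := P.d1ι'
  d0l := P.d0l'
  d1l := P.d1l'
  E22 := P.E11
  E20 := P.E10
  d0' := P.d0
  d1' := P.d1
  E21 := P.E12
  d0ι' := by simp [P.d0ι]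
  d1ι' := P.d1ι
  d0l' := P.d0l
  d1l' := P.d1l

theorem ρ1ι (a : M) : P.ρ (P.j1 (FL.ι (K := K) a)) = P.E1 a := by rw [P.ρ1, FL.lift_ι]

theorem ρ2ι (b : N) : P.ρ (P.j2 (FL.ι (K := K) b)) = P.E2 b := by rw [P.ρ2, FL.lift_ι]

theorem ρ1_lie (y y' : FL K M) (v : V) : P.ρ (P.j1 ⁅y, y'⁆) v =
    P.ρ (P.j1 y) (P.ρ (P.j1 y') v) - P.ρ (P.j1 y') (P.ρ (P.j1 y) v) := by
  simp [P.ρ1, Ring.lie_def]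

theorem ρ2_lie (y y' : FL K N) (v : V) : P.ρ (P.j2 ⁅y, y'⁆) v =
    P.ρ (P.j2 y) (P.ρ (P.j2 y') v) - P.ρ (P.j2 y') (P.ρ (P.j2 y) v) := P.swap.ρ1_lie y y' v

theorem ρ11 (y y' : FL K M) : P.ρ (P.j1 y) (P.j1 y') = P.j1 ⁅y, y'⁆ := by
  revert y'
  refine FL.induction (P := fun y => ∀ y', P.ρ (P.j1 y) (P.j1 y') = P.j1 ⁅y, y'⁆)
    ?_ ?_ ?_ ?_ ?_ y
  · intro m y'; rw [P.ρ1ι, P.E11]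
  · intro y'; simp
  · intro x y hx hy y'; simp [hx, hy]
  · intro c x hx y'; simp [hx]
  · intro x y hx hy y'
    rw [P.ρ1_lie, hy, hx, hx, hy, lie_lie, map_sub]

theorem ρ10 (y : FL K M) (g : G) : P.ρ (P.j1 y) (P.j0 g) = - P.j1 (act K M g y) := by
  refine FL.induction (P := fun y => P.ρ (P.j1 y) (P.j0 g) = - P.j1 (act K M g y))
    ?_ ?_ ?_ ?_ ?_ y
  · intro m; rw [P.ρ1ι, P.E10, act_ι]
  · simp
  · intro x y hx hy; simp [hx, hy]; abel
  · intro c x hx; simp [hx]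
  · intro x y hx hy
    rw [P.ρ1_lie, hy, hx, map_neg, map_neg, P.ρ11, P.ρ11, act_lie, map_add,
      ← lie_skew y (act K M g x), map_neg]
    abel

theorem ρ22 (y y' : FL K N) : P.ρ (P.j2 y) (P.j2 y') = P.j2 ⁅y, y'⁆ := P.swap.ρ11 y y'

theorem ρ20 (y : FL K N) (g : G) : P.ρ (P.j2 y) (P.j0 g) = - P.j2 (act K N g y) :=
  P.swap.ρ10 y g

/-- Key derivation property. -/
theorem K1 (a : M) (z z' : FL K N) : P.E1 a (P.j2 ⁅z, z'⁆) =
    P.ρ (P.j2 z) (P.E1 a (P.j2 z')) - P.ρ (P.j2 z') (P.E1 a (P.j2 z)) := by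
  simp only [P.E12, P.d0l, P.d1l, map_add, P.ρ22, P.ρ20, map_sub, map_zero]
  abel

theorem E0ρ10 (g h : G) (y : FL K M) : P.E0 g (P.ρ (P.j1 y) (P.j0 h)) =
    P.ρ (P.j1 (act K M g y)) (P.j0 h) + P.ρ (P.j1 y) (P.E0 g (P.j0 h)) := by
  simp only [P.ρ10, P.E00, map_neg, P.E01, act_bracket, map_sub]
  abel

theorem E0ρ11 (g : G) (y y' : FL K M) : P.E0 g (P.ρ (P.j1 y) (P.j1 y')) =
    P.ρ (P.j1 (act K M g y)) (P.j1 y') + P.ρ (P.j1 y) (P.E0 g (P.j1 y')) := by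
  simp only [P.ρ11, P.E01, act_lie, map_add]

theorem E0E12 (g : G) (a : M) (z : FL K N) : P.E1 ⁅g, a⁆ (P.j2 z) =
    P.E0 g (P.E1 a (P.j2 z)) - P.E1 a (P.E0 g (P.j2 z)) := by
  refine FL.induction (P := fun z => P.E1 ⁅g, a⁆ (P.j2 z) =
    P.E0 g (P.E1 a (P.j2 z)) - P.E1 a (P.E0 g (P.j2 z))) ?_ ?_ ?_ ?_ ?_ z
  · intro b
    simp only [P.E12, P.d0ι, P.d1ι, map_zero, add_zero, P.E00, P.E02, act_ι, P.hβ, map_add]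
    abel
  · simp
  · intro x y hx hy; simp only [map_add, hx, hy]; abel
  · intro c x hx; simp only [map_smul, hx, smul_sub]
  · intro x y hx hy
    have h : ∀ x y : FL K N, P.E0 g (P.ρ (P.j2 x) (P.E1 a (P.j2 y))) =
        P.ρ (P.j2 (act K N g x)) (P.E1 a (P.j2 y)) +
          P.ρ (P.j2 x) (P.E0 g (P.E1 a (P.j2 y))) := by
      intro x y
      have h1 := P.swap.E0ρ10 g (P.d0 a y) x
      have h2 := P.swap.E0ρ11 g x (P.d1 a y)
      simp only [swap] at h1 h2
      rw [P.E12, map_add, map_add, h1, h2]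
      simp only [map_add]
      abel
    simp only [P.E02] at hx hy
    simp only [P.K1, hx, hy, map_sub, h, P.E02, act_lie, map_add]
    abel

theorem E0E1 (g : G) (a : M) (v : V) : P.E1 ⁅g, a⁆ v =
    P.E0 g (P.E1 a v) - P.E1 a (P.E0 g v) := by
  obtain ⟨y, h, z, rfl⟩ := P.span v
  have h1 : P.E1 ⁅g, a⁆ (P.j1 y) =
      P.E0 g (P.E1 a (P.j1 y)) - P.E1 a (P.E0 g (P.j1 y)) := by
    simp only [P.E11, P.E01, act_lie, act_ι, map_add]; abel
  have h0 : P.E1 ⁅g, a⁆ (P.j0 h) =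
      P.E0 g (P.E1 a (P.j0 h)) - P.E1 a (P.E0 g (P.j0 h)) := by
    simp only [P.E10, P.E00, P.E01, act_ι, lie_lie, map_sub, map_neg]; abel
  simp only [map_add, h1, h0, P.E0E12]; abel

theorem E0ρ1 (g : G) (y : FL K M) (v : V) : P.ρ (P.j1 (act K M g y)) v =
    P.E0 g (P.ρ (P.j1 y) v) - P.ρ (P.j1 y) (P.E0 g v) := by
  revert v
  refine FL.induction (P := fun y => ∀ v, P.ρ (P.j1 (act K M g y)) v =
    P.E0 g (P.ρ (P.j1 y) v) - P.ρ (P.j1 y) (P.E0 g v)) ?_ ?_ ?_ ?_ ?_ y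
  · intro m v; rw [act_ι, P.ρ1ι, P.ρ1ι, P.E0E1]
  · intro v; simp
  · intro x y hx hy v; simp only [map_add, LinearMap.add_apply, hx, hy]; abel
  · intro c x hx v; simp only [map_smul, LinearMap.smul_apply, hx, smul_sub]
  · intro x y hx hy v
    simp only [act_lie, map_add, LinearMap.add_apply, P.ρ1_lie, hx, hy, map_sub]
    abel

theorem E0ρ2 (g : G) (y : FL K N) (v : V) : P.ρ (P.j2 (act K N g y)) v =
    P.E0 g (P.ρ (P.j2 y) v) - P.ρ (P.j2 y) (P.E0 g v) := P.swap.E0ρ1 g y v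

theorem E1E22 (a : M) (b : N) (z : FL K N) : P.E0 (P.β a b) (P.j2 z) =
    P.E1 a (P.E2 b (P.j2 z)) - P.E2 b (P.E1 a (P.j2 z)) := by
  rw [P.E22, P.K1, P.ρ2ι, P.E12 a (FL.ι (K := K) b), P.d0ι, P.d1ι, map_zero, add_zero, P.ρ20, P.E02]
  abel

theorem E1E2 (a : M) (b : N) (v : V) : P.E0 (P.β a b) v =
    P.E1 a (P.E2 b v) - P.E2 b (P.E1 a v) := by
  obtain ⟨y, g, z, rfl⟩ := P.span v
  have h1 : P.E0 (P.β a b) (P.j1 y) =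
      P.E1 a (P.E2 b (P.j1 y)) - P.E2 b (P.E1 a (P.j1 y)) := by
    have := P.swap.E1E22 b a y
    simp only [swap, LinearMap.neg_apply, LinearMap.flip_apply, map_neg] at this
    rw [← neg_inj, this, neg_sub]
  have h0 : P.E0 (P.β a b) (P.j0 g) =
      P.E1 a (P.E2 b (P.j0 g)) - P.E2 b (P.E1 a (P.j0 g)) := by
    rw [P.E20, P.E10, map_neg, map_neg, P.E12, P.E21, P.d0ι, P.d1ι, P.d0ι', P.d1ι', P.E00,
      ← lie_skew, P.hβ]
    simp only [map_neg, map_add, map_zero, add_zero]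
    abel
  simp only [map_add, h1, h0, P.E1E22]; abel

/-- The Leibniz identity at `x`. -/
def Leib (x : V) : Prop := ∀ v w, P.ρ (P.ρ x v) w = P.ρ x (P.ρ v w) - P.ρ v (P.ρ x w)

theorem leib_add {x y : V} (hx : P.Leib x) (hy : P.Leib y) : P.Leib (x + y) := by
  intro v w
  simp only [map_add, LinearMap.add_apply, hx v w, hy v w]; abel

theorem leib_smul {x : V} (c : K) (hx : P.Leib x) : P.Leib (c • x) := by
  intro v w
  simp only [map_smul, LinearMap.smul_apply, hx v w, smul_sub]

theorem leib0 (g : G) : P.Leib (P.j0 g) := by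
  intro v w
  obtain ⟨y, h, z, rfl⟩ := P.span v
  have h0 : P.E0 ⁅g, h⁆ w = P.E0 g (P.E0 h w) - P.E0 h (P.E0 g w) := by
    obtain ⟨y, k, z, rfl⟩ := P.span w
    simp only [map_add, P.E00, P.E01, P.E02, act_bracket, lie_lie, map_sub]
    abel
  simp only [map_add, P.ρ0, P.E00, P.E01, P.E02, LinearMap.add_apply, P.E0ρ1, P.E0ρ2, h0]
  abel

theorem leib1ι2 (a : M) (z : FL K N) (w : V) : P.ρ (P.E1 a (P.j2 z)) w =
    P.E1 a (P.ρ (P.j2 z) w) - P.ρ (P.j2 z) (P.E1 a w) := by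
  revert w
  refine FL.induction (P := fun z => ∀ w, P.ρ (P.E1 a (P.j2 z)) w =
    P.E1 a (P.ρ (P.j2 z) w) - P.ρ (P.j2 z) (P.E1 a w)) ?_ ?_ ?_ ?_ ?_ z
  · intro b w
    rw [P.E12, P.d0ι, P.d1ι, map_zero, add_zero, P.ρ0, P.ρ2ι, P.E1E2]
  · intro w; simp
  · intro x y hx hy w; simp only [map_add, LinearMap.add_apply, hx, hy]; abel
  · intro c x hx w; simp only [map_smul, LinearMap.smul_apply, hx, smul_sub]
  · intro x y hx hy w
    have h : ∀ (x y : FL K N) w, P.ρ (P.ρ (P.j2 x) (P.E1 a (P.j2 y))) w =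
        P.ρ (P.j2 x) (P.ρ (P.E1 a (P.j2 y)) w) - P.ρ (P.E1 a (P.j2 y)) (P.ρ (P.j2 x) w) := by
      intro x y w
      simp only [P.E12, map_add, P.ρ20, P.ρ22, LinearMap.add_apply, P.ρ2_lie, map_neg,
        LinearMap.neg_apply, P.E0ρ2, P.ρ0]
      abel
    rw [P.K1, map_sub, LinearMap.sub_apply, h, h, hx, hy, hx, hy, P.ρ2_lie, P.ρ2_lie]
    simp only [map_sub]
    abel

theorem leib1ι (a : M) : P.Leib (P.j1 (FL.ι (K := K) a)) := by
  intro v w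
  obtain ⟨y, h, z, rfl⟩ := P.span v
  simp only [map_add, LinearMap.add_apply, P.ρ1ι, P.leib1ι2, P.E11, P.ρ1_lie, P.E10, map_neg,
    LinearMap.neg_apply, P.E0E1, P.ρ0]
  abel

theorem leib1 (y : FL K M) : P.Leib (P.j1 y) := by
  refine FL.induction (P := fun y => P.Leib (P.j1 y)) P.leib1ι ?_ ?_ ?_ ?_ y
  · intro v w; simp
  · intro x y hx hy; rw [map_add]; exact P.leib_add hx hy
  · intro c x hx; rw [map_smul]; exact P.leib_smul c hx
  · intro x y hx hy v w
    simp only [P.ρ1_lie, map_sub, LinearMap.sub_apply, hx _ _, hy _ _]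
    abel

theorem leib (x : V) : P.Leib x := by
  obtain ⟨y, g, z, rfl⟩ := P.span x
  exact P.leib_add (P.leib_add (P.leib1 y) (P.leib0 g)) (P.swap.leib1 z)

/-- Skew symmetry at `x`. -/
def Skew (x : V) : Prop := ∀ v, P.ρ x v = - P.ρ v x

theorem skew_add {x y : V} (hx : P.Skew x) (hy : P.Skew y) : P.Skew (x + y) := by
  intro v
  simp only [map_add, LinearMap.add_apply, hx v, hy v]; abel

theorem skew_smul {x : V} (c : K) (hx : P.Skew x) : P.Skew (c • x) := by
  intro v
  simp only [map_smul, LinearMap.smul_apply, hx v, smul_neg]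

theorem skew0 (g : G) : P.Skew (P.j0 g) := by
  intro v
  obtain ⟨y, h, z, rfl⟩ := P.span v
  simp only [map_add, LinearMap.add_apply, P.ρ0, P.ρ10, P.ρ20, P.E00, P.E01, P.E02]
  rw [← lie_skew g h, map_neg]
  abel

theorem skew1ι2 (a : M) (z : FL K N) : P.E1 a (P.j2 z) = - P.ρ (P.j2 z) (P.j1 (FL.ι (K := K) a)) := by
  refine FL.induction (P := fun z => P.E1 a (P.j2 z) = - P.ρ (P.j2 z) (P.j1 (FL.ι (K := K) a)))
    ?_ ?_ ?_ ?_ ?_ z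
  · intro b
    rw [P.E12, P.d0ι, P.d1ι, P.ρ2ι, P.E21, P.d0ι', P.d1ι']; simp
  · simp
  · intro x y hx hy; simp only [map_add, LinearMap.add_apply, hx, hy]; abel
  · intro c x hx; simp only [map_smul, LinearMap.smul_apply, hx, smul_neg]
  · intro x y hx hy
    rw [P.K1, hx, hy, P.ρ2_lie, map_neg, map_neg]; abel

theorem skew1ι (a : M) : P.Skew (P.j1 (FL.ι (K := K) a)) := by
  intro v
  obtain ⟨y, h, z, rfl⟩ := P.span v
  simp only [map_add, LinearMap.add_apply, P.ρ0, P.ρ11, P.ρ1ι, P.E11, P.E10, P.E01, act_ι,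
    P.skew1ι2]
  rw [← lie_skew _ y, map_neg]
  abel

theorem skew1 (y : FL K M) : P.Skew (P.j1 y) := by
  refine FL.induction (P := fun y => P.Skew (P.j1 y)) P.skew1ι ?_ ?_ ?_ ?_ y
  · intro v; simp
  · intro x y hx hy; rw [map_add]; exact P.skew_add hx hy
  · intro c x hx; rw [map_smul]; exact P.skew_smul c hx
  · intro x y hx hy v
    have h := P.leib (P.j1 x) v (P.j1 y)
    have h2 := hy (P.ρ (P.j1 x) v)
    rw [P.ρ1_lie, ← P.ρ11, hy v, map_neg, h2, h]
    abel

theorem skew (x : V) : P.Skew x := by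
  obtain ⟨y, g, z, rfl⟩ := P.span x
  exact P.skew_add (P.skew_add (P.skew1 y) (P.skew0 g)) (P.swap.skew1 z)

theorem self (x : V) : P.ρ x x = 0 := by
  obtain ⟨y, g, z, rfl⟩ := P.span x
  simp only [map_add, LinearMap.add_apply]
  rw [P.skew (P.j0 g) (P.j1 y), P.skew (P.j2 z) (P.j1 y), P.skew (P.j2 z) (P.j0 g), P.ρ11, P.ρ22,
    P.ρ0, P.E00]
  simp only [lie_self, map_zero]
  abel

/-! ### The grading -/

/-- The homogeneous components. -/
def C (n : ℤ) : Submodule K V :=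
  (FL.gr K M (-n)).map P.j1 ⊔ (if n = 0 then ⊤ else ⊥ : Submodule K G).map P.j0 ⊔
    (FL.gr K N n).map P.j2

theorem j1_mem {n p : ℤ} {y : FL K M} (hy : y ∈ FL.gr K M p) (h : p = -n) :
    P.j1 y ∈ P.C n := by
  subst h
  exact Submodule.mem_sup_left (Submodule.mem_sup_left (Submodule.mem_map_of_mem hy))

theorem j0_mem {n : ℤ} (g : G) (h : n = 0) : P.j0 g ∈ P.C n := by
  subst h
  refine Submodule.mem_sup_left (Submodule.mem_sup_right (Submodule.mem_map_of_mem ?_))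
  simp

theorem j2_mem {n p : ℤ} {z : FL K N} (hz : z ∈ FL.gr K N p) (h : p = n) :
    P.j2 z ∈ P.C n := by
  subst h
  exact Submodule.mem_sup_right (Submodule.mem_map_of_mem hz)

theorem C_le {n : ℤ} {S : Submodule K V} (h1 : ∀ y ∈ FL.gr K M (-n), P.j1 y ∈ S)
    (h0 : n = 0 → ∀ g, P.j0 g ∈ S) (h2 : ∀ z ∈ FL.gr K N n, P.j2 z ∈ S) : P.C n ≤ S := by
  refine sup_le (sup_le ?_ ?_) ?_
  · rintro _ ⟨y, hy, rfl⟩; exact h1 y hy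
  · rintro _ ⟨g, hg, rfl⟩
    by_cases hn : n = 0
    · exact h0 hn g
    · rw [if_neg hn] at hg
      have hg' : g = 0 := hg
      rw [hg', map_zero]; exact S.zero_mem
  · rintro _ ⟨z, hz, rfl⟩; exact h2 z hz

theorem swap_C (n : ℤ) : P.swap.C n = P.C (-n) := by
  refine le_antisymm ?_ ?_
  · refine P.swap.C_le ?_ ?_ ?_
    · intro y hy; exact P.j2_mem hy rfl
    · intro hn g; exact P.j0_mem g (by omega)
    · intro z hz; exact P.j1_mem hz (by omega)
  · refine P.C_le ?_ ?_ ?_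
    · intro y hy; exact P.swap.j2_mem hy (by omega)
    · intro hn g; exact P.swap.j0_mem g (by omega)
    · intro z hz; exact P.swap.j1_mem hz (by omega)

theorem d_mem (a : M) {m : ℤ} {z : FL K N} (hz : FL.Hom m z) :
    (m ≠ 1 → P.d0 a z = 0) ∧ P.d1 a z ∈ FL.gr K N (m - 1) := by
  induction hz with
  | ι b => exact ⟨fun h => absurd rfl h, by rw [P.d1ι]; exact zero_mem _⟩
  | zero n => simp
  | add _ _ h1 h2 =>
    exact ⟨fun h => by rw [map_add, h1.1 h, h2.1 h, add_zero],
      by rw [map_add]; exact add_mem h1.2 h2.2⟩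
  | smul c _ h1 =>
    exact ⟨fun h => by rw [map_smul, h1.1 h, smul_zero],
      by rw [map_smul]; exact Submodule.smul_mem _ _ h1.2⟩
  | @lie n p x y hx hy h1 h2 =>
    refine ⟨fun _ => P.d0l a x y, ?_⟩
    rw [P.d1l]
    have key : ∀ {n p q : ℤ} {x y : FL K N}, FL.Hom n x → q = n + p →
        (p ≠ 1 → P.d0 a y = 0) → act K N (P.d0 a y) x ∈ FL.gr K N (q - 1) := by
      intro n p q x y hx hq h
      by_cases hp : p = 1
      · have : q - 1 = n := by omega
        rw [this]; exact act_mem_gr _ hx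
      · rw [h hp]; simp
    refine sub_mem (sub_mem ?_ ?_) (sub_mem ?_ ?_)
    · exact FL.lie_mem_gr hx h2.2 (by omega)
    · exact key hx rfl h2.1
    · exact FL.lie_mem_gr hy h1.2 (by omega)
    · exact key hy (add_comm n p) h1.1

theorem E1_mem (a : M) {m : ℤ} {v : V} (hv : v ∈ P.C m) : P.E1 a v ∈ P.C (m - 1) := by
  refine P.C_le (S := (P.C (m - 1)).comap (P.E1 a)) ?_ ?_ ?_ hv
  · intro y hy
    rw [Submodule.mem_comap, P.E11]
    exact P.j1_mem (FL.lie_mem_gr (FL.ι_mem_gr rfl a) hy rfl) (by omega)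
  · intro hm g
    rw [Submodule.mem_comap, P.E10]
    exact neg_mem (P.j1_mem (FL.ι_mem_gr rfl _) (by omega))
  · intro z hz
    rw [Submodule.mem_comap, P.E12]
    have h := P.d_mem a hz
    refine add_mem ?_ (P.j2_mem h.2 rfl)
    by_cases hm : m = 1
    · exact P.j0_mem _ (by omega)
    · rw [h.1 hm, map_zero]; exact zero_mem _

theorem E0_mem (g : G) {m : ℤ} {v : V} (hv : v ∈ P.C m) : P.E0 g v ∈ P.C m := by
  refine P.C_le (S := (P.C m).comap (P.E0 g)) ?_ ?_ ?_ hv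
  · intro y hy
    rw [Submodule.mem_comap, P.E01]
    exact P.j1_mem (act_mem_gr g hy) rfl
  · intro hm h
    rw [Submodule.mem_comap, P.E00]
    exact P.j0_mem _ hm
  · intro y hy
    rw [Submodule.mem_comap, P.E02]
    exact P.j2_mem (act_mem_gr g hy) rfl

theorem ρ1_mem {n : ℤ} {y : FL K M} (hy : FL.Hom n y) :
    ∀ {m q : ℤ} {v : V}, v ∈ P.C m → q = m - n → P.ρ (P.j1 y) v ∈ P.C q := by
  induction hy with
  | ι a => intro m q v hv hq; rw [hq, P.ρ1ι]; exact P.E1_mem a hv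
  | zero n => intro m q v hv hq; simp
  | add _ _ h1 h2 =>
    intro m q v hv hq
    rw [map_add, map_add, LinearMap.add_apply]; exact add_mem (h1 hv hq) (h2 hv hq)
  | smul c _ h1 =>
    intro m q v hv hq
    rw [map_smul, map_smul, LinearMap.smul_apply]; exact Submodule.smul_mem _ _ (h1 hv hq)
  | lie hx hy h1 h2 =>
    intro m q v hv hq
    rw [P.ρ1_lie]
    exact sub_mem (h1 (h2 hv rfl) (by omega)) (h2 (h1 hv rfl) (by omega))

theorem ρ2_mem {n : ℤ} {z : FL K N} (hz : FL.Hom n z) {m q : ℤ} {v : V} (hv : v ∈ P.C m)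
    (hq : q = m + n) : P.ρ (P.j2 z) v ∈ P.C q := by
  have h : v ∈ P.swap.C (-m) := by rw [P.swap_C, neg_neg]; exact hv
  have := P.swap.ρ1_mem hz (q := -q) h (by omega)
  rw [P.swap_C, neg_neg] at this
  exact this

theorem ρ_mem {n m : ℤ} {x v : V} (hx : x ∈ P.C n) (hv : v ∈ P.C m) : P.ρ x v ∈ P.C (n + m) := by
  refine P.C_le (S := (P.C (n + m)).comap (P.ρ.flip v)) ?_ ?_ ?_ hx
  · intro y hy
    exact P.ρ1_mem hy hv (by omega)
  · intro hn g
    rw [Submodule.mem_comap, LinearMap.flip_apply, P.ρ0, hn, zero_add]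
    exact P.E0_mem g hv
  · intro z hz
    exact P.ρ2_mem hz hv (by omega)

theorem iSup_C : ⨆ n, P.C n = ⊤ := by
  have h1 : ∀ y, P.j1 y ∈ ⨆ n, P.C n := by
    intro y
    have : (⨆ n, FL.gr K M n) ≤ (⨆ n, P.C n).comap P.j1 :=
      iSup_le fun n y hy => Submodule.mem_iSup_of_mem (-n) (P.j1_mem hy (by omega))
    rw [FL.iSup_gr] at this
    exact this Submodule.mem_top
  have h2 : ∀ y, P.j2 y ∈ ⨆ n, P.C n := by
    intro y
    have : (⨆ n, FL.gr K N n) ≤ (⨆ n, P.C n).comap P.j2 :=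
      iSup_le fun n y hy => Submodule.mem_iSup_of_mem n (P.j2_mem hy rfl)
    rw [FL.iSup_gr] at this
    exact this Submodule.mem_top
  rw [eq_top_iff]
  intro v _
  obtain ⟨y, g, z, rfl⟩ := P.span v
  exact add_mem (add_mem (h1 y) (Submodule.mem_iSup_of_mem 0 (P.j0_mem g rfl))) (h2 z)

theorem C_one {x : V} : x ∈ P.C 1 ↔ ∃ b, P.j2 (FL.ι (K := K) b) = x := by
  constructor
  · intro hx
    refine P.C_le (S := LinearMap.range (P.j2 ∘ₗ FL.ι)) ?_ ?_ ?_ hx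
    · intro y hy
      rw [FL.Hom.low hy |>.1 (by omega), map_zero]; exact zero_mem _
    · intro h; omega
    · intro z hz
      obtain ⟨b, rfl⟩ := (FL.Hom.low hz).2 rfl
      exact ⟨b, rfl⟩
  · rintro ⟨b, rfl⟩
    exact P.j2_mem (FL.ι_mem_gr rfl b) rfl

theorem C_neg_one {x : V} : x ∈ P.C (-1) ↔ ∃ b, P.j1 (FL.ι (K := K) b) = x := by
  rw [← P.swap_C]
  exact P.swap.C_one

theorem C_zero {x : V} : x ∈ P.C 0 ↔ ∃ g, P.j0 g = x := by
  constructor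
  · intro hx
    refine P.C_le (S := LinearMap.range P.j0) ?_ ?_ ?_ hx
    · intro y hy
      rw [FL.Hom.low hy |>.1 (by omega), map_zero]; exact zero_mem _
    · intro _ g; exact ⟨g, rfl⟩
    · intro y hy
      rw [FL.Hom.low hy |>.1 (by omega), map_zero]; exact zero_mem _
  · rintro ⟨g, rfl⟩
    exact P.j0_mem g rfl

theorem C_pos {n : ℤ} (hn : 1 ≤ n) {x : V} (hx : x ∈ P.C n) : ∃ z, P.j2 z = x := by
  refine P.C_le (S := LinearMap.range P.j2) ?_ ?_ ?_ hx
  · intro y hy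
    rw [FL.Hom.low hy |>.1 (by omega), map_zero]; exact zero_mem _
  · intro h; omega
  · intro z hz; exact ⟨z, rfl⟩

theorem C_neg {n : ℤ} (hn : n ≤ -1) {x : V} (hx : x ∈ P.C n) : ∃ z, P.j1 z = x := by
  refine P.swap.C_pos (n := -n) (by omega) ?_
  rw [P.swap_C, neg_neg]; exact hx

end Pre

/-- Independence from projections. -/
theorem isInternal_of_proj {K V : Type} [Field K] [AddCommGroup V] [Module K V]
    (C : ℤ → Submodule K V) (π : ℤ → V →ₗ[K] V)
    (h : ∀ n m : ℤ, ∀ v ∈ C n, π m v = if n = m then v else 0) (ht : ⨆ n, C n = ⊤) :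
    DirectSum.IsInternal C := by
  refine DirectSum.isInternal_submodule_of_iSupIndep_of_iSup_eq_top ?_ ht
  rw [iSupIndep_def]
  intro n
  rw [Submodule.disjoint_def]
  intro x hx hx'
  have h1 : (⨆ (j : ℤ) (_ : j ≠ n), C j) ≤ LinearMap.ker (π n) := by
    refine iSup_le fun j => iSup_le fun hj v hv => ?_
    rw [LinearMap.mem_ker, h j n v hv, if_neg hj]
  have h2 := h1 hx'
  rw [LinearMap.mem_ker, h n n x hx, if_pos rfl] at h2
  exact h2

/-! ### Existence of the data -/

/-- The operator `E1` on the concrete space. -/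
def mkE {K G M N : Type} [Field K] [LieRing G] [LieAlgebra K G]
    [AddCommGroup M] [Module K M] [LieRingModule G M] [LieModule K G M]
    [AddCommGroup N] [Module K N]
    (d0 : M →ₗ[K] FL K N →ₗ[K] G) (d1 : M →ₗ[K] FL K N →ₗ[K] FL K N) :
    M →ₗ[K] Module.End K (FL K M × G × FL K N) :=
  LinearMap.mk₂ K (fun a v => (⁅FL.ι (K := K) a, v.1⁆ - FL.ι (K := K) ⁅v.2.1, a⁆,
      d0 a v.2.2, d1 a v.2.2))
    (by intro a a' v; ext <;> simp; abel)
    (by intro c a v; ext <;> simp [smul_sub])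
    (by intro a v v'; ext <;> simp; abel)
    (by intro c a v; ext <;> simp [smul_sub])

/-- The operator `E0` on the concrete space. -/
def mkE0 (K G M N : Type) [Field K] [LieRing G] [LieAlgebra K G]
    [AddCommGroup M] [Module K M] [LieRingModule G M] [LieModule K G M]
    [AddCommGroup N] [Module K N] [LieRingModule G N] [LieModule K G N] :
    G →ₗ[K] Module.End K (FL K M × G × FL K N) :=
  LinearMap.mk₂ K (fun g v => (act K M g v.1, ⁅g, v.2.1⁆, act K N g v.2.2))
    (by intro a a' v; ext <;> simp)
    (by intro c a v; ext <;> simp)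
    (by intro a v v'; ext <;> simp)
    (by intro c a v; ext <;> simp)

/-- Conjugation by the flip of the two sides. -/
def flipE {K A B C : Type} [Field K] [AddCommGroup A] [Module K A] [AddCommGroup B] [Module K B]
    [AddCommGroup C] [Module K C] :
    Module.End K (C × B × A) →ₗ[K] Module.End K (A × B × C) where
  toFun f :=
    ((LinearMap.snd K B A ∘ₗ LinearMap.snd K C (B × A)).prod
      ((LinearMap.fst K B A ∘ₗ LinearMap.snd K C (B × A)).prod (LinearMap.fst K C (B × A))))
    ∘ₗ f ∘ₗ
    ((LinearMap.snd K B C ∘ₗ LinearMap.snd K A (B × C)).prod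
      ((LinearMap.fst K B C ∘ₗ LinearMap.snd K A (B × C)).prod (LinearMap.fst K A (B × C))))
  map_add' f g := by refine LinearMap.ext fun v => ?_; simp
  map_smul' c f := by refine LinearMap.ext fun v => ?_; simp

theorem flipE_apply {K A B C : Type} [Field K] [AddCommGroup A] [Module K A]
    [AddCommGroup B] [Module K B]
    [AddCommGroup C] [Module K C] (f : Module.End K (C × B × A)) (v : A × B × C) :
    flipE f v = ((f (v.2.2, v.2.1, v.1)).2.2, (f (v.2.2, v.2.1, v.1)).2.1,
      (f (v.2.2, v.2.1, v.1)).1) := rfl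

theorem exists_pre {K G M N : Type} [Field K] [LieRing G] [LieAlgebra K G]
    [AddCommGroup M] [Module K M] [LieRingModule G M] [LieModule K G M]
    [AddCommGroup N] [Module K N] [LieRingModule G N] [LieModule K G N]
    (β : M →ₗ[K] N →ₗ[K] G)
    (hβ : ∀ (x : G) (a : M) (b : N), ⁅x, β a b⁆ = β ⁅x, a⁆ b + β a ⁅x, b⁆) :
    ∃ P : Pre K G M N (FL K M × G × FL K N), P.β = β ∧
      (∀ y, P.j1 y = (y, 0, 0)) ∧ (∀ g, P.j0 g = (0, g, 0)) ∧ (∀ z, P.j2 z = (0, 0, z)) := by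
  obtain ⟨d0, d1, d0ι, d1ι, d0l, d1l⟩ := exists_delta (K := K) (G := G) β
  obtain ⟨d0', d1', d0ι', d1ι', d0l', d1l'⟩ := exists_delta (K := K) (G := G) (-β.flip)
  have hE1 : ∀ a (v : FL K M × G × FL K N), mkE d0 d1 a v =
    (⁅FL.ι (K := K) a, v.1⁆ - FL.ι (K := K) ⁅v.2.1, a⁆, d0 a v.2.2, d1 a v.2.2) := fun _ _ => rfl
  have hE2 : ∀ b (v : FL K M × G × FL K N), (flipE ∘ₗ mkE d0' d1') b v =
    (d1' b v.1, d0' b v.1, ⁅FL.ι (K := K) b, v.2.2⁆ - FL.ι (K := K) ⁅v.2.1, b⁆) :=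
      fun _ _ => rfl
  have hE0 : ∀ g (v : FL K M × G × FL K N), mkE0 K G M N g v =
    (act K M g v.1, ⁅g, v.2.1⁆, act K N g v.2.2) := fun _ _ => rfl
  refine ⟨
    { β := β
      hβ := hβ
      j1 := LinearMap.inl K _ _
      j0 := LinearMap.inr K _ _ ∘ₗ LinearMap.inl K _ _
      j2 := LinearMap.inr K _ _ ∘ₗ LinearMap.inr K _ _
      span := fun v => ⟨v.1, v.2.1, v.2.2, by simp⟩
      E1 := mkE d0 d1
      E0 := mkE0 K G M N
      E2 := flipE ∘ₗ mkE d0' d1'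
      ρ := (FL.lift (mkE d0 d1) : FL K M →ₗ[K] _) ∘ₗ LinearMap.fst K _ _
        + mkE0 K G M N ∘ₗ LinearMap.fst K _ _ ∘ₗ LinearMap.snd K _ _
        + (FL.lift (flipE ∘ₗ mkE d0' d1') : FL K N →ₗ[K] _) ∘ₗ LinearMap.snd K _ _ ∘ₗ
          LinearMap.snd K _ _
      ρ1 := fun y => by simp
      ρ0 := fun y => by simp
      ρ2 := fun y => by simp
      E01 := fun g y => by rw [hE0]; simp
      E00 := fun g y => by rw [hE0]; simp
      E02 := fun g y => by rw [hE0]; simp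
      E11 := fun g y => by rw [hE1]; simp
      E10 := fun g y => by rw [hE1]; simp
      d0 := d0
      d1 := d1
      E12 := fun g y => by rw [hE1]; simp
      d0ι := d0ι
      d1ι := d1ι
      d0l := d0l
      d1l := d1l
      E22 := fun g y => by rw [hE2]; simp
      E20 := fun g y => by rw [hE2]; simp
      d0' := d0'
      d1' := d1'
      E21 := fun g y => by rw [hE2]; simp
      d0ι' := fun b a => by rw [d0ι']; simp
      d1ι' := d1ι'
      d0l' := d0l'
      d1l' := d1l' }, rfl, ?_, ?_, ?_⟩
  · intro y; rfl
  · intro y; rfl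
  · intro y; rfl

/-- The Lie algebra obtained from the data. -/
theorem exists_of_pre {K G M N V : Type} [Field K] [LieRing G] [LieAlgebra K G]
    [AddCommGroup M] [Module K M] [LieRingModule G M] [LieModule K G M]
    [AddCommGroup N] [Module K N] [LieRingModule G N] [LieModule K G N]
    [AddCommGroup V] [Module K V]
    (D : LocalLieData K M G N) (P : Pre K G M N V) (hP : P.β = D.br)
    (i1 : Function.Injective P.j1) (i0 : Function.Injective P.j0) (i2 : Function.Injective P.j2)
    (hI : DirectSum.IsInternal P.C) : Nonempty (MaxGradedExtension K M G N D) := by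
  letI iR : LieRing V :=
    { bracket := fun x y => P.ρ x y
      add_lie := fun x y z => by simp [Bracket.bracket]
      lie_add := fun x y z => by simp [Bracket.bracket]
      lie_self := fun x => P.self x
      leibniz_lie := fun x y z => by
        change P.ρ x (P.ρ y z) = P.ρ (P.ρ x y) z + P.ρ y (P.ρ x z)
        rw [P.leib x y z]; abel }
  letI iA : LieAlgebra K V :=
    { lie_smul := fun c x y => (P.ρ x).map_smul c y }
  have hbr : ∀ x y : V, ⁅x, y⁆ = P.ρ x y := fun _ _ => rfl
  let J1 : FL K M →ₗ⁅K⁆ V := { P.j1 with map_lie' := fun {x y} => (P.ρ11 x y).symm }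
  let J2 : FL K N →ₗ⁅K⁆ V := { P.j2 with map_lie' := fun {x y} => (P.ρ22 x y).symm }
  let eneg : M ≃ₗ[K] P.C (-1) := LinearEquiv.ofBijective
    ((P.j1 ∘ₗ FL.ι).codRestrict (P.C (-1)) fun a => P.C_neg_one.2 ⟨a, rfl⟩)
    ⟨fun a b h => FL.ι_injective (i1 (congrArg Subtype.val h)),
      fun ⟨x, hx⟩ => by
        obtain ⟨a, rfl⟩ := P.C_neg_one.1 hx
        exact ⟨a, rfl⟩⟩
  let epos : N ≃ₗ[K] P.C 1 := LinearEquiv.ofBijective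
    ((P.j2 ∘ₗ FL.ι).codRestrict (P.C 1) fun a => P.C_one.2 ⟨a, rfl⟩)
    ⟨fun a b h => FL.ι_injective (i2 (congrArg Subtype.val h)),
      fun ⟨x, hx⟩ => by
        obtain ⟨a, rfl⟩ := P.C_one.1 hx
        exact ⟨a, rfl⟩⟩
  let ezero : G ≃ₗ[K] P.C 0 := LinearEquiv.ofBijective
    (P.j0.codRestrict (P.C 0) fun a => P.C_zero.2 ⟨a, rfl⟩)
    ⟨fun a b h => i0 (congrArg Subtype.val h),
      fun ⟨x, hx⟩ => by
        obtain ⟨a, rfl⟩ := P.C_zero.1 hx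
        exact ⟨a, rfl⟩⟩
  have heneg : ∀ a, ((eneg a : P.C (-1)) : V) = P.j1 (FL.ι a) := fun _ => rfl
  have hepos : ∀ a, ((epos a : P.C 1) : V) = P.j2 (FL.ι a) := fun _ => rfl
  have hezero : ∀ a, ((ezero a : P.C 0) : V) = P.j0 a := fun _ => rfl
  have hneg := FL.exists_unique_of_injective J1 i1 (P.C (-1) : Set V)
    (Set.ext fun x => P.C_neg_one)
  have hpos := FL.exists_unique_of_injective J2 i2 (P.C 1 : Set V)
    (Set.ext fun x => P.C_one)
  exact ⟨
    { L := V
      lieRing := iR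
      lieAlgebra := iA
      comp := P.C
      isInternal := hI
      graded_bracket := fun n m x hx y hy => P.ρ_mem hx hy
      eneg := eneg
      ezero := ezero
      epos := epos
      zero_bracket := fun x y => by
        rw [hezero, hezero, hezero, hbr, P.ρ0, P.E00]
      act_neg := fun x a => by
        rw [hezero, heneg, heneg, hbr, P.ρ0, P.E01, act_ι]
      act_pos := fun x a => by
        rw [hezero, hepos, hepos, hbr, P.ρ0, P.E02, act_ι]
      br_compat := fun a b => by
        rw [hezero, heneg, hepos, hbr, P.ρ1ι, P.E12, P.d0ι, P.d1ι, hP, map_zero, add_zero]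
      pos_gen := fun n hn x hx => by
        obtain ⟨z, rfl⟩ := P.C_pos hn hx
        exact hpos.1 z
      pos_free := fun A _ _ φ => by
        obtain ⟨g, hg, hu⟩ := hpos.2 A φ
        exact ⟨g, fun b => hg b _, fun g' hg' => hu g' fun m h => hg' m⟩
      neg_gen := fun n hn x hx => by
        obtain ⟨z, rfl⟩ := P.C_neg hn hx
        exact hneg.1 z
      neg_free := fun A _ _ φ => by
        obtain ⟨g, hg, hu⟩ := hneg.2 A φ
        exact ⟨g, fun b => hg b _, fun g' hg' => hu g' fun m h => hg' m⟩ }⟩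

theorem exists_main {K G M N : Type} [Field K] [LieRing G] [LieAlgebra K G]
    [AddCommGroup M] [Module K M] [LieRingModule G M] [LieModule K G M]
    [AddCommGroup N] [Module K N] [LieRingModule G N] [LieModule K G N]
    (D : LocalLieData K M G N) : Nonempty (MaxGradedExtension K M G N D) := by
  obtain ⟨P, hβ, h1, h0, h2⟩ := exists_pre D.br D.equivariant
  refine exists_of_pre D P hβ ?_ ?_ ?_ ?_
  · intro x y h; rw [h1, h1] at h; exact congrArg (fun v => v.1) h
  · intro x y h; rw [h0, h0] at h; exact congrArg (fun v => v.2.1) h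
  · intro x y h; rw [h2, h2] at h; exact congrArg (fun v => v.2.2) h
  · refine isInternal_of_proj P.C (fun n => (FL.proj K M (-n)).prodMap
      ((if n = 0 then LinearMap.id else 0 : G →ₗ[K] G).prodMap (FL.proj K N n))) ?_ P.iSup_C
    intro n m v hv
    let S : Submodule K (FL K M × G × FL K N) := LinearMap.eqLocus
      ((FL.proj K M (-m)).prodMap
        ((if m = 0 then LinearMap.id else 0 : G →ₗ[K] G).prodMap (FL.proj K N m)))
      (if n = m then LinearMap.id else 0)
    have hS : P.C n ≤ S := by
      refine P.C_le ?_ ?_ ?_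
      · intro y hy
        rw [h1, LinearMap.mem_eqLocus]
        by_cases h : n = m
        · subst h; simp [FL.proj_of_mem hy]
        · simp [FL.proj_of_mem hy, h]
      · intro hn g
        subst hn
        rw [h0, LinearMap.mem_eqLocus]
        by_cases h : 0 = m
        · subst h; simp
        · simp [h, Ne.symm h]
      · intro y hy
        rw [h2, LinearMap.mem_eqLocus]
        by_cases h : n = m
        · subst h; simp [FL.proj_of_mem hy]
        · simp [FL.proj_of_mem hy, h]
    have := hS hv
    rw [LinearMap.mem_eqLocus] at this
    rw [this]
    split_ifs <;> rfl

end LocalLie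

end LocalLieConstruction

/-- For every local Lie algebra `G = Gneg ⊕ Gzero ⊕ Gpos` there exists a maximal
`ℤ`-graded Lie algebra `L_max(G)`, with underlying graded space
`Free(Gneg) ⊕ Gzero ⊕ Free(Gpos)`, whose local part is `G` and whose bracket extends
the given local bracket. -/
theorem exists_maxGradedExtension (K Gneg Gzero Gpos : Type) [Field K]
    [LieRing Gzero] [LieAlgebra K Gzero]
    [AddCommGroup Gneg] [Module K Gneg] [LieRingModule Gzero Gneg] [LieModule K Gzero Gneg]
    [AddCommGroup Gpos] [Module K Gpos] [LieRingModule Gzero Gpos] [LieModule K Gzero Gpos]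
    (D : LocalLieData K Gneg Gzero Gpos) :
    Nonempty (MaxGradedExtension K Gneg Gzero Gpos D) := by
  exact LocalLie.exists_main D
end
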